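/- Let n ≥ 1 be an integer, 0 < s < 1, p = 1, and let u = χ_E be the characteristic function of a measurable set E ⊂ ℝⁿ which is 2π-periodic in the variable x₁, with finite periodic Gagliardo seminorm [u]^{per}_{W^{s,1}}. Then [u^{*per}]^{per}_{W^{s,1}} = [u]^{per}_{W^{s,1}} holds if and only if there exists a ∈ ℝ such that u(x₁,x') = u^{*per}(x₁ + a, x') for almost every (x₁,x') ∈ ℝ × ℝ^{n−1}. -/

import Mathlib

open MeasureTheory Real
open scoped ENNReal

/-- For a measurable set `A ⊂ ℝ` of finite measure, `A^* := (−|A|/2, |A|/2)`. -/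
noncomputable def symmSet (A : Set ℝ) : Set ℝ :=
  Set.Ioo (-((volume A).toReal / 2)) ((volume A).toReal / 2)

/-- Symmetric decreasing rearrangement of a (nonnegative) function on `(−π,π)`:
`u^*(x) := ∫₀^∞ χ_{{u>t}^*}(x) dt`. -/
noncomputable def symmRearr (u : ℝ → ℝ) : ℝ → ℝ := fun x =>
  ∫ t in Set.Ioi (0 : ℝ),
    (symmSet {y | y ∈ Set.Ioo (-π) π ∧ t < u y}).indicator (fun _ => (1 : ℝ)) x

/-- The `2π`-periodic extension of (the restriction to `[−π,π)` of) a function. -/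
noncomputable def periodize (f : ℝ → ℝ) : ℝ → ℝ := fun x =>
  f (x - 2 * π * (⌊(x + π) / (2 * π)⌋ : ℝ))

/-- The periodic rearrangement `f^{*per}`: the `2π`-periodic extension of `(f·χ_{(−π,π)})^*`. -/
noncomputable def perRearr (f : ℝ → ℝ) : ℝ → ℝ := periodize (symmRearr f)
/-- `([u]^{per}_{W^{s,p}})^p`, the `p`-th power of the periodic Gagliardo seminorm on
`ℝⁿ = ℝ × ℝ^{n−1}` (so `n = m + 1`), for a function which is `2π`-periodic in the first
variable. -/
noncomputable def gagP (m : ℕ) (s p : ℝ) (u : ℝ × EuclideanSpace ℝ (Fin m) → ℝ) : ℝ≥0∞ :=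
  ∫⁻ x in {x : ℝ × EuclideanSpace ℝ (Fin m) | x.1 ∈ Set.Ioo (-π) π},
    ∫⁻ y : ℝ × EuclideanSpace ℝ (Fin m),
      ENNReal.ofReal (|u x - u y| ^ p /
        Real.sqrt ((x.1 - y.1) ^ 2 + ‖x.2 - y.2‖ ^ 2) ^ ((m : ℝ) + 1 + s * p))

/-- The periodic Gagliardo seminorm `[u]^{per}_{W^{s,p}}`. -/
noncomputable def gagSeminorm (m : ℕ) (s p : ℝ) (u : ℝ × EuclideanSpace ℝ (Fin m) → ℝ) :
    ℝ≥0∞ :=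
  gagP m s p u ^ (1 / p)
/-- The periodic rearrangement in the first variable:
`u^{*per}(x₁,x') := (|u(·,x')|)^{*per}(x₁)`. -/
noncomputable def perRearr1 (m : ℕ) (u : ℝ × EuclideanSpace ℝ (Fin m) → ℝ) :
    ℝ × EuclideanSpace ℝ (Fin m) → ℝ := fun x =>
  perRearr (fun t => |u (t, x.2)|) x.1

/-!
Slicing in `x₁` writes the seminorm of `χ_E` as an integral, over pairs of slices of `E`, of an
interaction energy on the circle `ℝ / 2πℤ` with kernel `∑ₖ ((z + 2πk)² + r²)^{-p/2}`. Subordination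
to Gaussians makes this kernel a superposition of theta functions, so it is strictly decreasing on
`(0, π)` by the finite Jacobi triple product. By the layer cake formula, its energy is a
superposition of the energies of the kernels `χ_{(-ρ, ρ)}`.

For `χ_{(-ρ, ρ)}` the energy is, up to constants, the leakage `∫ (1 - g) m`, where `m y` is the mass
of the slice `f` in the window `[y - ρ, y + ρ]`. At every level `t` the leakage is at least
`∫ min m t - t ∫ g`, with equality if `m ≥ t` on `g` and `m ≤ t` off `g`; for two arcs with the same
centre there is such a level. As a function of `ρ`, the capped mass `∫ min m t` is concave and takes
known values at the ends of the relevant range, so it lies above its chord, which arcs attain. Hence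
arcs minimise the energy.

If the seminorms agree, then so do the energies of almost every pair of slices, for almost every
superlevel set of the kernel. Taking `ρ` slightly larger than the difference of the half-lengths
makes the level `t` small, and equality then forces both slices to be arcs with a common centre.
-/

/-! ### Periodic densities and their windows -/

/-- Measurable `T`-periodic functions with values in `[0, 1]`: the measurable subsets of the circle
`ℝ / Tℤ`, relaxed to densities. -/
structure IsPeriodicDensity (T : ℝ) (f : ℝ → ℝ) : Prop where
  measurable : Measurable f
  periodic : Function.Periodic f T
  mem_Icc : ∀ x, f x ∈ Set.Icc (0 : ℝ) 1

/-- The mass of `f` in the window `[y - ρ, y + ρ]`. -/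
noncomputable def windowMass (f : ℝ → ℝ) (ρ y : ℝ) : ℝ :=
  ∫ z in (y - ρ)..(y + ρ), f z

/-- The integral over a period of the mass of `f` in windows of radius `ρ`, capped at level `t`.
As a function of `ρ` it is concave, which is what drives the rearrangement inequality. -/
noncomputable def cappedMass (T : ℝ) (f : ℝ → ℝ) (t ρ : ℝ) : ℝ :=
  ∫ y in (0 : ℝ)..T, min (windowMass f ρ y) t

/-- The `f`-mass which windows of radius `ρ` centred outside `g` leak, `g` being a density. -/
noncomputable def leakage (T : ℝ) (f g : ℝ → ℝ) (ρ : ℝ) : ℝ :=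
  ∫ y in (0 : ℝ)..T, (1 - g y) * windowMass f ρ y

theorem concaveOn_univ_of_continuous_of_add_le {G : ℝ → ℝ} (hG : Continuous G)
    (hmid : ∀ x d, G (x + d) + G (x - d) ≤ 2 * G x) : ConcaveOn ℝ Set.univ G := by
  refine concaveOn_of_slope_anti_adjacent convex_univ fun {p q r} _ _ hpq hqr ↦ ?_
  have hpr : p < r := hpq.trans hqr
  set F : ℝ → ℝ := fun x ↦ (r - p) * G x - ((r - x) * G p + (x - p) * G r) with hF
  have hFc : Continuous F := by fun_prop
  have hFmid (x d : ℝ) : F (x + d) + F (x - d) ≤ 2 * F x := by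
    have := mul_le_mul_of_nonneg_left (hmid x d) (sub_nonneg.2 hpr.le)
    simp only [hF]
    linarith
  suffices h : 0 ≤ F q by
    rw [div_le_div_iff₀ (sub_pos.2 hqr) (sub_pos.2 hpq)]
    simp only [hF] at h
    linarith
  by_contra! hq
  -- The midpoint inequality fails at the leftmost minimiser of `F` on `[p, r]`.
  obtain ⟨x, hx, hmin⟩ :=
    isCompact_Icc.exists_isMinOn (Set.nonempty_Icc.2 hpr.le) hFc.continuousOn
  have hxq : F x ≤ F q := hmin ⟨hpq.le, hqr.le⟩
  have hcompact : IsCompact (Set.Icc p r ∩ F ⁻¹' {F x}) :=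
    isCompact_Icc.inter_right (isClosed_singleton.preimage hFc)
  obtain ⟨x₀, ⟨⟨hpx₀, hx₀r⟩, hFx₀ : F x₀ = F x⟩, hleast⟩ := hcompact.exists_isLeast ⟨x, hx, rfl⟩
  have hFp : F p = 0 := by simp only [hF]; ring
  have hFr : F r = 0 := by simp only [hF]; ring
  have hpx₀ : p < x₀ := hpx₀.lt_of_ne (by rintro rfl; linarith)
  have hx₀r : x₀ < r := hx₀r.lt_of_ne (by rintro rfl; linarith)
  obtain ⟨d, hd, hdp, hdr⟩ : ∃ d > 0, p ≤ x₀ - d ∧ x₀ + d ≤ r :=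
    ⟨min (x₀ - p) (r - x₀), lt_min (by linarith) (by linarith),
      by linarith [min_le_left (x₀ - p) (r - x₀)], by linarith [min_le_right (x₀ - p) (r - x₀)]⟩
  have hleft : F x < F (x₀ - d) := by
    refine (hmin ⟨hdp, by linarith⟩).lt_of_ne fun h ↦ ?_
    linarith [hleast ⟨⟨hdp, by linarith⟩, h.symm⟩]
  have hright : F x ≤ F (x₀ + d) := hmin ⟨by linarith, hdr⟩
  linarith [hFmid x₀ d]

namespace IsPeriodicDensity

variable {T t ρ : ℝ} {f g : ℝ → ℝ}

theorem nonneg (hf : IsPeriodicDensity T f) (x : ℝ) : 0 ≤ f x := (hf.mem_Icc x).1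

theorem le_one (hf : IsPeriodicDensity T f) (x : ℝ) : f x ≤ 1 := (hf.mem_Icc x).2

theorem comp_add_const (hf : IsPeriodicDensity T f) (c : ℝ) :
    IsPeriodicDensity T fun x ↦ f (x + c) where
  measurable := hf.measurable.comp (measurable_add_const c)
  periodic := hf.periodic.add_const c
  mem_Icc x := hf.mem_Icc (x + c)

theorem intervalIntegrable (hf : IsPeriodicDensity T f) (a b : ℝ) :
    IntervalIntegrable f volume a b := by
  refine (intervalIntegrable_const (c := (1 : ℝ))).mono_fun hf.measurable.aestronglyMeasurable ?_
  filter_upwards with x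
  rw [norm_one, Real.norm_of_nonneg (hf.nonneg x)]
  exact hf.le_one x

theorem integral_nonneg (hf : IsPeriodicDensity T f) {a b : ℝ} (hab : a ≤ b) :
    0 ≤ ∫ x in a..b, f x :=
  intervalIntegral.integral_nonneg hab fun x _ ↦ hf.nonneg x

theorem integral_le_sub (hf : IsPeriodicDensity T f) {a b : ℝ} (hab : a ≤ b) :
    ∫ x in a..b, f x ≤ b - a := by
  simpa using intervalIntegral.integral_mono_on hab (hf.intervalIntegrable a b)
    (intervalIntegrable_const (c := (1 : ℝ))) fun x _ ↦ hf.le_one x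

theorem integral_add (hf : IsPeriodicDensity T f) (a b c : ℝ) :
    (∫ x in a..b, f x) + ∫ x in b..c, f x = ∫ x in a..c, f x :=
  intervalIntegral.integral_add_adjacent_intervals
    (hf.intervalIntegrable a b) (hf.intervalIntegrable b c)

theorem integral_mono_interval (hf : IsPeriodicDensity T f) {a b c d : ℝ} (hca : c ≤ a)
    (hab : a ≤ b) (hbd : b ≤ d) : ∫ x in a..b, f x ≤ ∫ x in c..d, f x :=
  intervalIntegral.integral_mono_interval hca hab hbd
    (Filter.Eventually.of_forall hf.nonneg) (hf.intervalIntegrable c d)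

theorem integral_period (hf : IsPeriodicDensity T f) (c : ℝ) :
    ∫ x in c..(c + T), f x = ∫ x in 0..T, f x := by
  simpa using hf.periodic.intervalIntegral_add_eq c 0

theorem windowMass_eq_sub (hf : IsPeriodicDensity T f) (ρ y : ℝ) :
    windowMass f ρ y = (∫ z in 0..(y + ρ), f z) - ∫ z in 0..(y - ρ), f z := by
  rw [windowMass, ← hf.integral_add 0 (y - ρ) (y + ρ)]
  ring

theorem continuous_windowMass_uncurry (hf : IsPeriodicDensity T f) :
    Continuous fun q : ℝ × ℝ ↦ windowMass f q.1 q.2 := by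
  have hprim : Continuous fun x ↦ ∫ z in (0 : ℝ)..x, f z :=
    intervalIntegral.continuous_primitive hf.intervalIntegrable 0
  simp only [hf.windowMass_eq_sub]
  fun_prop

theorem continuous_windowMass (hf : IsPeriodicDensity T f) (ρ : ℝ) :
    Continuous (windowMass f ρ) :=
  hf.continuous_windowMass_uncurry.comp (Continuous.prodMk_right ρ)

theorem windowMass_nonneg (hf : IsPeriodicDensity T f) (hρ : 0 ≤ ρ) (y : ℝ) :
    0 ≤ windowMass f ρ y :=
  hf.integral_nonneg (by linarith)

theorem windowMass_le (hf : IsPeriodicDensity T f) (hρ : 0 ≤ ρ) (y : ℝ) :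
    windowMass f ρ y ≤ 2 * ρ := by
  have := hf.integral_le_sub (a := y - ρ) (b := y + ρ) (by linarith)
  rw [windowMass]
  linarith

theorem integral_sub_le_windowMass (hf : IsPeriodicDensity T f) (hρ : 2 * ρ ≤ T) (y : ℝ) :
    (∫ x in 0..T, f x) - (T - 2 * ρ) ≤ windowMass f ρ y := by
  have hsplit := hf.integral_add (y - ρ) (y + ρ) (y - ρ + T)
  have hrest := hf.integral_le_sub (a := y + ρ) (b := y - ρ + T) (by linarith)
  rw [hf.integral_period] at hsplit
  rw [windowMass]
  linarith

end IsPeriodicDensity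

theorem windowMass_comp_add_const (f : ℝ → ℝ) (c ρ y : ℝ) :
    windowMass (fun x ↦ f (x + c)) ρ y = windowMass f ρ (y + c) := by
  rw [windowMass, windowMass, intervalIntegral.integral_comp_add_right]
  congr 1 <;> ring

theorem windowMass_periodic {T : ℝ} {f : ℝ → ℝ} (hf : Function.Periodic f T) (ρ : ℝ) :
    Function.Periodic (windowMass f ρ) T := fun y ↦ by
  rw [← windowMass_comp_add_const f T ρ y, funext hf]

theorem integral_comp_add_const_of_periodic {T : ℝ} {h : ℝ → ℝ} (hh : Function.Periodic h T)
    (c : ℝ) : ∫ y in 0..T, h (y + c) = ∫ y in 0..T, h y := by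
  rw [intervalIntegral.integral_comp_add_right, zero_add, add_comm T]
  simpa using hh.intervalIntegral_add_eq c 0

namespace IsPeriodicDensity

variable {T t ρ : ℝ} {f g : ℝ → ℝ}

theorem integral_windowMass (hf : IsPeriodicDensity T f) (hT : 0 ≤ T) (hρ : 0 ≤ ρ) :
    ∫ y in 0..T, windowMass f ρ y = 2 * ρ * ∫ x in 0..T, f x := by
  have hint : Integrable (Function.uncurry fun y z ↦ f (z + y))
      ((volume.restrict (Set.Ioc 0 T)).prod (volume.restrict (Set.Ioc (-ρ) ρ))) := by
    refine Integrable.of_bound (hf.measurable.comp (by fun_prop)).aestronglyMeasurable 1 ?_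
    filter_upwards with q
    exact (Real.norm_of_nonneg (hf.nonneg _)).trans_le (hf.le_one _)
  have hwindow (y : ℝ) : windowMass f ρ y = ∫ z in -ρ..ρ, f (z + y) := by
    rw [windowMass, intervalIntegral.integral_comp_add_right]
    congr 1 <;> ring
  calc ∫ y in 0..T, windowMass f ρ y
      = ∫ z in -ρ..ρ, ∫ y in 0..T, f (z + y) := by
        simp only [hwindow, intervalIntegral.integral_of_le hT,
          intervalIntegral.integral_of_le (neg_le_self hρ)]
        exact integral_integral_swap hint
    _ = ∫ _ in -ρ..ρ, ∫ x in 0..T, f x :=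
        intervalIntegral.integral_congr fun z _ ↦ by
          simpa only [add_comm z] using integral_comp_add_const_of_periodic hf.periodic z
    _ = 2 * ρ * ∫ x in 0..T, f x := by
        rw [intervalIntegral.integral_const, smul_eq_mul]
        ring

/-! ### Concavity of the capped mass -/

theorem continuous_min_windowMass (hf : IsPeriodicDensity T f) (ρ t : ℝ) :
    Continuous fun y ↦ min (windowMass f ρ y) t :=
  (hf.continuous_windowMass ρ).min continuous_const

theorem cappedMass_eq_integral_comp_add (hf : IsPeriodicDensity T f) (t ρ c : ℝ) :
    cappedMass T f t ρ = ∫ y in 0..T, min (windowMass f ρ (y + c)) t :=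
  (integral_comp_add_const_of_periodic
    ((windowMass_periodic hf.periodic ρ).comp fun m ↦ min m t) c).symm

theorem min_windowMass_add_le (hf : IsPeriodicDensity T f) (t ρ : ℝ) {d : ℝ} (hd : 0 ≤ d)
    (y : ℝ) :
    min (windowMass f (ρ + d) y) t + min (windowMass f (ρ - d) y) t ≤
      min (windowMass f ρ (y - d)) t + min (windowMass f ρ (y + d)) t := by
  set left := ∫ z in (y - ρ - d)..(y - ρ + d), f z
  set middle := ∫ z in (y - ρ + d)..(y + ρ - d), f z
  set right := ∫ z in (y + ρ - d)..(y + ρ + d), f z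
  have h₁ : windowMass f (ρ + d) y = left + middle + right := by
    rw [hf.integral_add, hf.integral_add, windowMass]
    congr 1 <;> ring
  have h₂ : windowMass f (ρ - d) y = middle := by
    rw [windowMass]
    congr 1 <;> ring
  have h₃ : windowMass f ρ (y - d) = left + middle := by
    rw [hf.integral_add, windowMass]
    congr 1 <;> ring
  have h₄ : windowMass f ρ (y + d) = middle + right := by
    rw [hf.integral_add, windowMass]
    congr 1 <;> ring
  have hleft₀ : 0 ≤ left := hf.integral_nonneg (by linarith)
  have hright₀ : 0 ≤ right := hf.integral_nonneg (by linarith)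
  rw [h₁, h₂, h₃, h₄]
  rcases min_cases (left + middle) t with h | h <;> rcases min_cases (middle + right) t with h' | h'
    <;> linarith [min_le_left (left + middle + right) t, min_le_right (left + middle + right) t,
      min_le_left middle t, min_le_right middle t]

theorem concaveOn_cappedMass (hf : IsPeriodicDensity T f) (hT : 0 ≤ T) (t : ℝ) :
    ConcaveOn ℝ Set.univ (cappedMass T f t) := by
  have hcont : Continuous (cappedMass T f t) :=
    intervalIntegral.continuous_parametric_intervalIntegral_of_continuous'
      (hf.continuous_windowMass_uncurry.min continuous_const) 0 T
  have hint (ρ c : ℝ) :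
      IntervalIntegrable (fun y ↦ min (windowMass f ρ (y + c)) t) volume 0 T :=
    ((hf.continuous_min_windowMass ρ t).comp (continuous_add_const c)).intervalIntegrable _ _
  have hmid (ρ : ℝ) {d : ℝ} (hd : 0 ≤ d) :
      cappedMass T f t (ρ + d) + cappedMass T f t (ρ - d) ≤ 2 * cappedMass T f t ρ := by
    have hmono := intervalIntegral.integral_mono_on hT ((hint (ρ + d) 0).add (hint (ρ - d) 0))
      ((hint ρ (-d)).add (hint ρ d)) fun y _ ↦ by
        simpa only [add_zero, ← sub_eq_add_neg] using hf.min_windowMass_add_le t ρ hd y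
    rw [intervalIntegral.integral_add (hint _ _) (hint _ _),
      intervalIntegral.integral_add (hint _ _) (hint _ _)] at hmono
    simpa only [← hf.cappedMass_eq_integral_comp_add, two_mul] using hmono
  refine concaveOn_univ_of_continuous_of_add_le hcont fun ρ d ↦ ?_
  rcases le_total 0 d with hd | hd
  · exact hmid ρ hd
  · simpa only [sub_neg_eq_add, ← sub_eq_add_neg, add_comm] using hmid ρ (neg_nonneg.2 hd)

theorem cappedMass_half (hf : IsPeriodicDensity T f) (hT : 0 ≤ T) (ht : 0 ≤ t) :
    cappedMass T f t (t / 2) = t * ∫ x in 0..T, f x := by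
  have hcap (y : ℝ) : min (windowMass f (t / 2) y) t = windowMass f (t / 2) y :=
    min_eq_left ((hf.windowMass_le (by positivity) y).trans (by linarith))
  simp only [cappedMass, hcap]
  rw [hf.integral_windowMass hT (by positivity)]
  ring

theorem cappedMass_of_le (hf : IsPeriodicDensity T f) (hρ : 2 * ρ ≤ T)
    (htρ : T + t - (∫ x in 0..T, f x) ≤ 2 * ρ) : cappedMass T f t ρ = T * t := by
  have hcap (y : ℝ) : min (windowMass f ρ y) t = t :=
    min_eq_right (by linarith [hf.integral_sub_le_windowMass hρ y])
  simp [cappedMass, hcap]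

/- The chord of the concave function `ρ ↦ cappedMass T f t ρ` between `t / 2` and
`(T + t - ∫ f) / 2`, where its values are known. -/
theorem mul_le_cappedMass (hf : IsPeriodicDensity T f) (hT : 0 ≤ T) (ht : 0 ≤ t)
    (htρ : t ≤ 2 * ρ) (htf : t ≤ ∫ x in 0..T, f x)
    (hρ : 2 * ρ ≤ T + t - ∫ x in 0..T, f x) :
    t * ((∫ x in 0..T, f x) + 2 * ρ - t) ≤ cappedMass T f t ρ := by
  have hleft := hf.cappedMass_half hT ht
  have hright := hf.cappedMass_of_le (ρ := (T + t - ∫ x in 0..T, f x) / 2) (t := t)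
    (by linarith) (by linarith)
  have hmass : ∫ x in 0..T, f x ≤ T := by simpa using hf.integral_le_sub hT
  have hconc := hf.concaveOn_cappedMass hT t
  set A := ∫ x in 0..T, f x
  rcases htρ.eq_or_lt with rfl | htρ
  · rw [mul_div_cancel_left₀ _ two_ne_zero] at hleft
    rw [hleft]
    linarith
  rcases hρ.eq_or_lt with hρ | hρ
  · have : ρ = (T + t - A) / 2 := by linarith
    rw [this, hright]
    nlinarith
  have hslope := hconc.slope_anti_adjacent (x := t / 2) (y := ρ) (z := (T + t - A) / 2)
    trivial trivial (by linarith) (by linarith)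
  rw [hleft, hright, div_le_div_iff₀ (by linarith) (by linarith)] at hslope
  have hpos : 0 < (T - A) / 2 := by linarith
  refine le_of_mul_le_mul_left ?_ hpos
  nlinarith

/-! ### Leakage -/

theorem leakage_comp_add_const (hf : IsPeriodicDensity T f) (hg : IsPeriodicDensity T g)
    (c ρ : ℝ) :
    leakage T (fun x ↦ f (x + c)) (fun x ↦ g (x + c)) ρ = leakage T f g ρ := by
  simp only [leakage, windowMass_comp_add_const]
  exact integral_comp_add_const_of_periodic (h := fun y ↦ (1 - g y) * windowMass f ρ y)
    (fun y ↦ by simp only [hg.periodic y, windowMass_periodic hf.periodic ρ y]) c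

theorem intervalIntegrable_excess_outside (hf : IsPeriodicDensity T f)
    (hg : IsPeriodicDensity T g) (ρ t a b : ℝ) :
    IntervalIntegrable (fun y ↦ (1 - g y) * (windowMass f ρ y - min (windowMass f ρ y) t))
      volume a b :=
  (intervalIntegrable_const.sub (hg.intervalIntegrable _ _)).mul_continuousOn
    ((hf.continuous_windowMass ρ).sub (hf.continuous_min_windowMass ρ t)).continuousOn

theorem intervalIntegrable_deficit_inside (hf : IsPeriodicDensity T f)
    (hg : IsPeriodicDensity T g) (ρ t a b : ℝ) :
    IntervalIntegrable (fun y ↦ g y * (t - min (windowMass f ρ y) t)) volume a b :=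
  (hg.intervalIntegrable _ _).mul_continuousOn
    (continuous_const.sub (hf.continuous_min_windowMass ρ t)).continuousOn

theorem leakage_eq (hf : IsPeriodicDensity T f) (hg : IsPeriodicDensity T g) (ρ t : ℝ) :
    leakage T f g ρ = cappedMass T f t ρ - t * (∫ y in 0..T, g y) +
      (∫ y in 0..T, (1 - g y) * (windowMass f ρ y - min (windowMass f ρ y) t)) +
      ∫ y in 0..T, g y * (t - min (windowMass f ρ y) t) := by
  have hcap : IntervalIntegrable (fun y ↦ min (windowMass f ρ y) t) volume 0 T :=
    (hf.continuous_min_windowMass ρ t).intervalIntegrable _ _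
  have hmass : IntervalIntegrable (fun y ↦ t * g y) volume 0 T :=
    (hg.intervalIntegrable _ _).const_mul t
  have hout := hf.intervalIntegrable_excess_outside hg ρ t 0 T
  have hin := hf.intervalIntegrable_deficit_inside hg ρ t 0 T
  rw [leakage, cappedMass, ← intervalIntegral.integral_const_mul,
    ← intervalIntegral.integral_sub hcap hmass,
    ← intervalIntegral.integral_add (hcap.sub hmass) hout,
    ← intervalIntegral.integral_add ((hcap.sub hmass).add hout) hin]
  exact intervalIntegral.integral_congr fun y _ ↦ by ring

theorem excess_outside_nonneg (hg : IsPeriodicDensity T g) (ρ t y : ℝ) :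
    0 ≤ (1 - g y) * (windowMass f ρ y - min (windowMass f ρ y) t) :=
  mul_nonneg (sub_nonneg.2 (hg.le_one y)) (sub_nonneg.2 (min_le_left _ _))

theorem deficit_inside_nonneg (hg : IsPeriodicDensity T g) (ρ t y : ℝ) :
    0 ≤ g y * (t - min (windowMass f ρ y) t) :=
  mul_nonneg (hg.nonneg y) (sub_nonneg.2 (min_le_right _ _))

theorem cappedMass_sub_le_leakage (hf : IsPeriodicDensity T f) (hg : IsPeriodicDensity T g)
    (hT : 0 ≤ T) (ρ t : ℝ) :
    cappedMass T f t ρ - t * (∫ y in 0..T, g y) ≤ leakage T f g ρ := by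
  have hout := intervalIntegral.integral_nonneg (μ := volume) hT fun y _ ↦
    hg.excess_outside_nonneg (f := f) ρ t y
  have hin := intervalIntegral.integral_nonneg (μ := volume) hT fun y _ ↦
    hg.deficit_inside_nonneg (f := f) ρ t y
  rw [hf.leakage_eq hg ρ t]
  linarith

end IsPeriodicDensity

/-! ### Arcs -/

theorem periodize_periodic (f : ℝ → ℝ) : Function.Periodic (periodize f) (2 * π) := fun x ↦ by
  have hfloor : (x + 2 * π + π) / (2 * π) = (x + π) / (2 * π) + 1 := by
    field_simp
    ring
  rw [periodize, periodize, hfloor, Int.floor_add_one]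
  push_cast
  ring_nf

theorem periodize_apply_of_mem (f : ℝ → ℝ) {x : ℝ} (hx : x ∈ Set.Ico (-π) π) :
    periodize f x = f x := by
  have hfloor : ⌊(x + π) / (2 * π)⌋ = 0 := by
    rw [Int.floor_eq_zero_iff]
    exact ⟨div_nonneg (by linarith [hx.1]) two_pi_pos.le,
      (div_lt_one two_pi_pos).2 (by linarith [hx.2])⟩
  simp [periodize, hfloor]

theorem measurable_periodize {f : ℝ → ℝ} (hf : Measurable f) : Measurable (periodize f) :=
  hf.comp (by fun_prop)

/-- The indicator function of the arc of half-length `a` centred at `0` in the circle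
`ℝ / 2πℤ`, as a `2π`-periodic function. -/
noncomputable def arc (a : ℝ) : ℝ → ℝ := periodize ((Set.Ioo (-a) a).indicator 1)

theorem isPeriodicDensity_arc (a : ℝ) : IsPeriodicDensity (2 * π) (arc a) where
  measurable := measurable_periodize (measurable_one.indicator measurableSet_Ioo)
  periodic := periodize_periodic _
  mem_Icc _ := ⟨Set.indicator_nonneg (fun _ _ ↦ zero_le_one) _,
    Set.indicator_le_self' (fun _ _ ↦ zero_le_one) _⟩

theorem arc_eq_one {a x : ℝ} (ha : a ≤ π) (hx : x ∈ Set.Ioo (-a) a) : arc a x = 1 := by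
  rw [arc, periodize_apply_of_mem _ ⟨by linarith [hx.1], by linarith [hx.2]⟩,
    Set.indicator_of_mem hx, Pi.one_apply]

theorem arc_eq_zero {a x : ℝ} (ha : 0 ≤ a) (hx : x ∈ Set.Icc a (2 * π - a)) : arc a x = 0 := by
  rcases lt_or_ge x π with hxπ | hxπ
  · rw [arc, periodize_apply_of_mem _ ⟨by linarith [hx.1, pi_pos], hxπ⟩,
      Set.indicator_of_notMem fun h ↦ h.2.not_ge hx.1]
  · rw [arc, ← (periodize_periodic _).sub_eq x,
      periodize_apply_of_mem _ ⟨by linarith, by linarith [hx.2, pi_pos]⟩,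
      Set.indicator_of_notMem fun h ↦ h.1.not_ge (by linarith [hx.2])]

namespace IsPeriodicDensity

variable {T : ℝ} {f : ℝ → ℝ}

theorem integral_le_of_eq_zero (hf : IsPeriodicDensity T f) {c d p q : ℝ} (hcd : c ≤ d)
    (hpq : p ≤ q) (hzero : ∀ x ∈ Set.Icc c d, f x = 0) :
    ∫ x in p..q, f x ≤ max (c - p) 0 + max (q - d) 0 := by
  have hmiddle : ∫ x in c..d, f x = 0 :=
    (intervalIntegral.integral_congr fun x hx ↦ hzero x (Set.uIcc_of_le hcd ▸ hx)).trans
      intervalIntegral.integral_zero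
  calc ∫ x in p..q, f x
      ≤ ∫ x in min p c..max q d, f x :=
        hf.integral_mono_interval (min_le_left _ _) hpq (le_max_left _ _)
    _ = (∫ x in min p c..c, f x) + ∫ x in d..max q d, f x := by
        rw [← hf.integral_add _ c _, ← hf.integral_add c d, hmiddle, zero_add]
    _ ≤ (c - min p c) + (max q d - d) :=
        add_le_add (hf.integral_le_sub (min_le_right _ _)) (hf.integral_le_sub (le_max_right _ _))
    _ = max (c - p) 0 + max (q - d) 0 := by
        rw [← max_sub_sub_left, ← max_sub_sub_right, sub_self, sub_self]

theorem le_integral_of_eq_one (hf : IsPeriodicDensity T f) {c d p q : ℝ} (hpq : p ≤ q)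
    (hone : ∀ x ∈ Set.Ioo c d, f x = 1) : min q d - max p c ≤ ∫ x in p..q, f x := by
  rcases le_or_gt (max p c) (min q d) with hle | hlt
  · calc min q d - max p c = ∫ x in max p c..min q d, f x := by
          rw [intervalIntegral.integral_congr_Ioo_of_le hle (g := 1) fun x hx ↦
            hone x ⟨(le_max_right _ _).trans_lt hx.1, hx.2.trans_le (min_le_right _ _)⟩]
          simp
      _ ≤ ∫ x in p..q, f x := hf.integral_mono_interval (le_max_left _ _) hle (min_le_left _ _)
  · linarith [hf.integral_nonneg hpq]

end IsPeriodicDensity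

section WindowsOfArcs

variable {a t ρ : ℝ}

theorem le_windowMass_arc (ha : a ≤ π) (hρ : 0 ≤ ρ) (y : ℝ) :
    min (y + ρ) a - max (y - ρ) (-a) ≤ windowMass (arc a) ρ y :=
  (isPeriodicDensity_arc a).le_integral_of_eq_one (by linarith) fun _ ↦ arc_eq_one ha

theorem windowMass_arc_le (ha₀ : 0 ≤ a) (ha : a ≤ π) (hρ : 0 ≤ ρ) (y : ℝ) :
    windowMass (arc a) ρ y ≤ max (a + ρ - y) 0 + max (y - (2 * π - a - ρ)) 0 := by
  rw [windowMass]
  convert (isPeriodicDensity_arc a).integral_le_of_eq_zero (p := y - ρ) (q := y + ρ) (by linarith)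
    (by linarith) fun _ ↦ arc_eq_zero ha₀ using 2 <;> ring_nf

theorem integral_arc (ha₀ : 0 ≤ a) (ha : a ≤ π) : ∫ x in 0..2 * π, arc a x = 2 * a := by
  have harc := isPeriodicDensity_arc a
  rw [← harc.integral_period (-a)]
  apply le_antisymm
  · refine (harc.integral_le_of_eq_zero (by linarith) (by linarith [pi_pos]) fun _ ↦
      arc_eq_zero ha₀).trans_eq ?_
    rw [max_eq_left (by linarith), max_eq_right (by linarith)]
    ring
  · refine le_trans ?_ (harc.le_integral_of_eq_one (by linarith [pi_pos]) fun _ ↦ arc_eq_one ha)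
    rw [min_eq_right (by linarith), max_self]
    linarith

theorem windowMass_arc_le_two_mul (ha₀ : 0 ≤ a) (ha : a ≤ π) (hρ₀ : 0 ≤ ρ) (hρ : ρ ≤ π) (y : ℝ) :
    windowMass (arc a) ρ y ≤ 2 * a := by
  have harc := isPeriodicDensity_arc a
  calc windowMass (arc a) ρ y ≤ ∫ x in (y - ρ)..(y - ρ + 2 * π), arc a x :=
        harc.integral_mono_interval le_rfl (by linarith) (by linarith)
    _ = 2 * a := by rw [harc.integral_period, integral_arc ha₀ ha]

theorem integral_max_const_sub_zero {c p q : ℝ} (hpc : p ≤ c) (hcq : c ≤ q) :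
    ∫ y in p..q, max (c - y) 0 = (c - p) ^ 2 / 2 := by
  have hint (x y : ℝ) : IntervalIntegrable (fun y ↦ max (c - y) 0) volume x y :=
    (by fun_prop : Continuous fun y ↦ max (c - y) 0).intervalIntegrable x y
  have hleft : ∫ y in p..c, max (c - y) 0 = ∫ y in p..c, (c - y) :=
    intervalIntegral.integral_congr fun y hy ↦
      max_eq_left (sub_nonneg.2 (Set.uIcc_of_le hpc ▸ hy).2)
  have hright : ∫ y in c..q, max (c - y) 0 = ∫ _ in c..q, (0 : ℝ) :=
    intervalIntegral.integral_congr fun y hy ↦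
      max_eq_right (sub_nonpos.2 (Set.uIcc_of_le hcq ▸ hy).1)
  rw [← intervalIntegral.integral_add_adjacent_intervals (hint p c) (hint c q), hleft, hright,
    intervalIntegral.integral_sub intervalIntegrable_const intervalIntegral.intervalIntegrable_id,
    intervalIntegral.integral_const, integral_id, intervalIntegral.integral_zero, smul_eq_mul]
  ring

theorem integral_max_sub_const_zero {c p q : ℝ} (hpc : p ≤ c) (hcq : c ≤ q) :
    ∫ y in p..q, max (y - c) 0 = (q - c) ^ 2 / 2 := by
  have hreflect := intervalIntegral.integral_comp_neg (fun y ↦ max (y - c) 0) (a := -q) (b := -p)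
  rw [neg_neg, neg_neg] at hreflect
  calc ∫ y in p..q, max (y - c) 0 = ∫ y in -q..-p, max (-c - y) 0 := by
        rw [← hreflect]
        exact intervalIntegral.integral_congr fun y _ ↦ by ring_nf
    _ = (q - c) ^ 2 / 2 := by
        rw [integral_max_const_sub_zero (by linarith) (by linarith)]
        ring

theorem cappedMass_arc_le (ha₀ : 0 ≤ a) (ha : a ≤ π) (hρ : 0 ≤ ρ) (ht₀ : 0 ≤ t)
    (ht : 2 * (a + ρ - π) ≤ t) (hta : t ≤ 2 * a) (htρ : t ≤ 2 * ρ) :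
    cappedMass (2 * π) (arc a) t ρ ≤ t * (2 * a + 2 * ρ - t) := by
  have harc := isPeriodicDensity_arc a
  set β := a + ρ - t with hβ
  have hint (p q : ℝ) : IntervalIntegrable (fun y ↦ min (windowMass (arc a) ρ y) t) volume p q :=
    (harc.continuous_min_windowMass ρ t).intervalIntegrable p q
  have hnear : ∫ y in -β..β, min (windowMass (arc a) ρ y) t ≤ 2 * β * t := by
    have := intervalIntegral.integral_mono_on (by linarith) (hint (-β) β)
      (intervalIntegrable_const (c := t)) fun y _ ↦ min_le_right _ _
    rw [intervalIntegral.integral_const, smul_eq_mul] at this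
    linarith
  have htent : ∫ y in β..(2 * π - β), max (a + ρ - y) 0 = t ^ 2 / 2 := by
    rw [integral_max_const_sub_zero (by linarith) (by linarith)]
    ring
  have htent' : ∫ y in β..(2 * π - β), max (y - (2 * π - a - ρ)) 0 = t ^ 2 / 2 := by
    rw [integral_max_sub_const_zero (by linarith) (by linarith)]
    ring
  have hfar : ∫ y in β..(2 * π - β), min (windowMass (arc a) ρ y) t ≤ t ^ 2 := by
    have hint₁ := (by fun_prop : Continuous fun y ↦ max (a + ρ - y) 0).intervalIntegrable
      (μ := volume) β (2 * π - β)
    have hint₂ := (by fun_prop : Continuous fun y ↦ max (y - (2 * π - a - ρ)) 0).intervalIntegrable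
      (μ := volume) β (2 * π - β)
    have := intervalIntegral.integral_mono_on (by linarith) (hint β (2 * π - β))
      (hint₁.add hint₂) fun y _ ↦ (min_le_left _ _).trans (windowMass_arc_le ha₀ ha hρ y)
    rw [intervalIntegral.integral_add hint₁ hint₂, htent, htent'] at this
    linarith
  have hperiod := ((windowMass_periodic harc.periodic ρ).comp
    fun m ↦ min m t).intervalIntegral_add_eq 0 (-β)
  rw [zero_add, neg_add_eq_sub] at hperiod
  calc cappedMass (2 * π) (arc a) t ρ
      = (∫ y in -β..β, min (windowMass (arc a) ρ y) t) +
          ∫ y in β..(2 * π - β), min (windowMass (arc a) ρ y) t := by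
        rw [intervalIntegral.integral_add_adjacent_intervals (hint _ _) (hint _ _)]
        exact hperiod
    _ ≤ 2 * β * t + t ^ 2 := add_le_add hnear hfar
    _ = t * (2 * a + 2 * ρ - t) := by rw [hβ]; ring

end WindowsOfArcs

/-! ### The rearrangement inequality on the circle -/

/-- A common level for the windows of radius `ρ`: their mass in `arc a` is at least `arcLevel a b ρ`
when they are centred in `arc b`, and at most `arcLevel a b ρ` when they are not. -/
noncomputable def arcLevel (a b ρ : ℝ) : ℝ :=
  max (max 0 (2 * (a + ρ - π))) (min (a + ρ - b) (min (2 * a) (2 * ρ)))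

section Riesz

variable {a b ρ : ℝ}

theorem arcLevel_nonneg : 0 ≤ arcLevel a b ρ := (le_max_left _ _).trans (le_max_left _ _)

theorem le_arcLevel : 2 * (a + ρ - π) ≤ arcLevel a b ρ := (le_max_right _ _).trans (le_max_left _ _)

theorem arcLevel_le_left (ha : 0 ≤ a) (hρ : ρ ≤ π) : arcLevel a b ρ ≤ 2 * a :=
  max_le (max_le (by linarith) (by linarith)) ((min_le_right _ _).trans (min_le_left _ _))

theorem arcLevel_le_right (ha : a ≤ π) (hρ : 0 ≤ ρ) : arcLevel a b ρ ≤ 2 * ρ :=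
  max_le (max_le (by linarith) (by linarith)) ((min_le_right _ _).trans (min_le_right _ _))

theorem arcLevel_le_windowMass_arc (ha₀ : 0 ≤ a) (ha : a ≤ π) (hρ₀ : 0 ≤ ρ) (hρ : ρ ≤ π) {y : ℝ}
    (hy : y ∈ Set.Ioo (-b) b) : arcLevel a b ρ ≤ windowMass (arc a) ρ y := by
  have harc := isPeriodicDensity_arc a
  refine max_le (max_le (harc.windowMass_nonneg hρ₀ y) ?_)
    ((le_sub_iff_add_le.2 ?_).trans (le_windowMass_arc ha hρ₀ y))
  · linarith [harc.integral_sub_le_windowMass (by linarith) y, integral_arc ha₀ ha]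
  · have := min_le_left (a + ρ - b) (min (2 * a) (2 * ρ))
    have := (min_le_right (a + ρ - b) _).trans (min_le_left (2 * a) (2 * ρ))
    have := (min_le_right (a + ρ - b) _).trans (min_le_right (2 * a) (2 * ρ))
    rcases max_cases (y - ρ) (-a) with h | h <;>
      exact le_min (by linarith [hy.1]) (by linarith [hy.2])

theorem windowMass_arc_le_arcLevel (ha₀ : 0 ≤ a) (ha : a ≤ π) (hρ₀ : 0 ≤ ρ) (hρ : ρ ≤ π) {y : ℝ}
    (hy : y ∈ Set.Icc b (2 * π - b)) : windowMass (arc a) ρ y ≤ arcLevel a b ρ := by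
  have hmass := windowMass_arc_le_two_mul ha₀ ha hρ₀ hρ y
  have hlength := (isPeriodicDensity_arc a).windowMass_le hρ₀ y
  have hoverlap := windowMass_arc_le ha₀ ha hρ₀ y
  have hone_end (h : windowMass (arc a) ρ y ≤ a + ρ - b) :
      windowMass (arc a) ρ y ≤ arcLevel a b ρ :=
    le_max_of_le_right (le_min h (le_min hmass hlength))
  rcases max_cases (a + ρ - y) 0 with ⟨h, -⟩ | ⟨h, -⟩ <;>
    rcases max_cases (y - (2 * π - a - ρ)) 0 with ⟨h', -⟩ | ⟨h', -⟩ <;> rw [h, h'] at hoverlap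
  · exact (by linarith : _ ≤ 2 * (a + ρ - π)).trans le_arcLevel
  · exact hone_end (by linarith [hy.1])
  · exact hone_end (by linarith [hy.2])
  · exact (by linarith : _ ≤ (0 : ℝ)).trans arcLevel_nonneg

theorem leakage_arc_eq (ha₀ : 0 ≤ a) (ha : a ≤ π) (hb₀ : 0 ≤ b) (hb : b ≤ π) (hρ₀ : 0 ≤ ρ)
    (hρ : ρ ≤ π) : leakage (2 * π) (arc a) (arc b) ρ =
      cappedMass (2 * π) (arc a) (arcLevel a b ρ) ρ - arcLevel a b ρ * (2 * b) := by
  have hA := isPeriodicDensity_arc a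
  have hB := isPeriodicDensity_arc b
  set t := arcLevel a b ρ
  have hpoint : (Set.Ioo (-b) (-b + 2 * π)).EqOn (fun y ↦ (1 - arc b y) * windowMass (arc a) ρ y)
      fun y ↦ min (windowMass (arc a) ρ y) t - t * arc b y := fun y hy ↦ by
    rcases lt_or_ge y b with hyb | hyb
    · have hin := arcLevel_le_windowMass_arc ha₀ ha hρ₀ hρ ⟨hy.1, hyb⟩
      simp [arc_eq_one hb ⟨hy.1, hyb⟩, min_eq_right hin, t]
    · have hyb' : y ∈ Set.Icc b (2 * π - b) := ⟨hyb, by linarith [hy.2]⟩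
      have hout := windowMass_arc_le_arcLevel ha₀ ha hρ₀ hρ hyb'
      simp [arc_eq_zero hb₀ hyb', min_eq_left hout, t]
  have hperiod : Function.Periodic (windowMass (arc a) ρ) (2 * π) :=
    windowMass_periodic hA.periodic ρ
  calc leakage (2 * π) (arc a) (arc b) ρ
      = ∫ y in -b..(-b + 2 * π), (1 - arc b y) * windowMass (arc a) ρ y := by
        rw [Function.Periodic.intervalIntegral_add_eq (fun y ↦ by simp only [hB.periodic y,
          hperiod y]) (-b) 0, zero_add, leakage]
    _ = ∫ y in -b..(-b + 2 * π), (min (windowMass (arc a) ρ y) t - t * arc b y) :=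
        intervalIntegral.integral_congr_Ioo_of_le (by linarith [pi_pos]) hpoint
    _ = ∫ y in 0..2 * π, (min (windowMass (arc a) ρ y) t - t * arc b y) := by
        rw [Function.Periodic.intervalIntegral_add_eq (fun y ↦ by simp only [hB.periodic y,
          hperiod y]) (-b) 0, zero_add]
    _ = cappedMass (2 * π) (arc a) t ρ - t * (2 * b) := by
        rw [intervalIntegral.integral_sub
          ((hA.continuous_min_windowMass ρ t).intervalIntegrable _ _)
          ((hB.intervalIntegrable _ _).const_mul t), intervalIntegral.integral_const_mul,
          integral_arc hb₀ hb, cappedMass]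

theorem leakage_arc_le (ha₀ : 0 ≤ a) (ha : a ≤ π) (hb₀ : 0 ≤ b) (hb : b ≤ π) (hρ₀ : 0 ≤ ρ)
    (hρ : ρ ≤ π) : leakage (2 * π) (arc a) (arc b) ρ ≤
      arcLevel a b ρ * (2 * a + 2 * ρ - arcLevel a b ρ) - arcLevel a b ρ * (2 * b) := by
  rw [leakage_arc_eq ha₀ ha hb₀ hb hρ₀ hρ]
  exact sub_le_sub_right (cappedMass_arc_le ha₀ ha hρ₀ arcLevel_nonneg le_arcLevel
    (arcLevel_le_left ha₀ hρ) (arcLevel_le_right ha hρ₀)) _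

variable {f g : ℝ → ℝ}

namespace IsPeriodicDensity

theorem mul_arcLevel_le_cappedMass (hf : IsPeriodicDensity (2 * π) f) (ha₀ : 0 ≤ a) (ha : a ≤ π)
    (hρ₀ : 0 ≤ ρ) (hρ : ρ ≤ π) (hfa : ∫ x in 0..2 * π, f x = 2 * a) (b : ℝ) :
    arcLevel a b ρ * (2 * a + 2 * ρ - arcLevel a b ρ) ≤
      cappedMass (2 * π) f (arcLevel a b ρ) ρ := by
  rw [← hfa]
  exact hf.mul_le_cappedMass two_pi_pos.le arcLevel_nonneg (arcLevel_le_right ha hρ₀)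
    (hfa ▸ arcLevel_le_left ha₀ hρ) (by linarith [le_arcLevel (a := a) (b := b) (ρ := ρ)])

theorem leakage_arc_le_leakage (hf : IsPeriodicDensity (2 * π) f)
    (hg : IsPeriodicDensity (2 * π) g) (ha₀ : 0 ≤ a) (ha : a ≤ π) (hb₀ : 0 ≤ b) (hb : b ≤ π)
    (hρ₀ : 0 ≤ ρ) (hρ : ρ ≤ π) (hfa : ∫ x in 0..2 * π, f x = 2 * a)
    (hgb : ∫ x in 0..2 * π, g x = 2 * b) :
    leakage (2 * π) (arc a) (arc b) ρ ≤ leakage (2 * π) f g ρ := by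
  have harc := leakage_arc_le ha₀ ha hb₀ hb hρ₀ hρ
  have hchord := hf.mul_arcLevel_le_cappedMass ha₀ ha hρ₀ hρ hfa b
  have hcap := hf.cappedMass_sub_le_leakage hg two_pi_pos.le ρ (arcLevel a b ρ)
  rw [hgb] at hcap
  linarith

end IsPeriodicDensity

end Riesz

/-! ### The equality case on the circle -/

section Rigidity

variable {T a b t ρ : ℝ} {f g : ℝ → ℝ}

theorem ae_comp_add_const {P : ℝ → Prop} (hP : ∀ᵐ x, P x) (c : ℝ) : ∀ᵐ x, P (x + c) :=
  (measurePreserving_add_right volume c).quasiMeasurePreserving.ae hP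

theorem ae_of_periodic_of_ae_mem_Ioc {P : ℝ → Prop} (hT : 0 < T) (hP : Function.Periodic P T)
    (c : ℝ) (h : ∀ᵐ x, x ∈ Set.Ioc c (c + T) → P x) : ∀ᵐ x, P x := by
  have htranslates : ∀ᵐ x, ∀ k : ℤ, x + k • T ∈ Set.Ioc c (c + T) → P (x + k • T) :=
    ae_all_iff.2 fun k ↦ ae_comp_add_const h (k • T)
  filter_upwards [htranslates] with x hx
  obtain ⟨k, hk, -⟩ := existsUnique_add_zsmul_mem_Ioc hT x c
  exact hP.zsmul k x ▸ hx k hk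

theorem windowMass_congr_ae (h : f =ᵐ[volume] g) (ρ y : ℝ) :
    windowMass f ρ y = windowMass g ρ y :=
  intervalIntegral.integral_congr_ae (h.mono fun _ hx _ ↦ hx)

theorem leakage_congr_ae {f' g' : ℝ → ℝ} (hf : f =ᵐ[volume] f') (hg : g =ᵐ[volume] g') (ρ : ℝ) :
    leakage T f g ρ = leakage T f' g' ρ :=
  intervalIntegral.integral_congr_ae
    (hg.mono fun x hx _ ↦ by rw [hx, windowMass_congr_ae hf])

namespace IsPeriodicDensity

theorem ae_eq_one_of_le_integral (hf : IsPeriodicDensity T f) {c d : ℝ} (hcd : c ≤ d)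
    (h : d - c ≤ ∫ x in c..d, f x) : ∀ᵐ x, x ∈ Set.Ioc c d → f x = 1 := by
  have hdefect : ∫ x in c..d, (1 - f x) = 0 := by
    rw [intervalIntegral.integral_sub intervalIntegrable_const (hf.intervalIntegrable _ _)]
    simpa using sub_eq_zero.2 (h.antisymm (hf.integral_le_sub hcd))
  rw [intervalIntegral.integral_eq_zero_iff_of_le_of_nonneg_ae hcd
    (ae_of_all _ fun x ↦ sub_nonneg.2 (hf.le_one x))
    (intervalIntegrable_const.sub (hf.intervalIntegrable _ _))] at hdefect
  filter_upwards [ae_imp_of_ae_restrict hdefect] with x hx hmem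
  exact (sub_eq_zero.1 (hx hmem)).symm

theorem ae_eq_zero_of_integral_le (hf : IsPeriodicDensity T f) {c d : ℝ} (hcd : c ≤ d)
    (h : ∫ x in c..d, f x ≤ 0) : ∀ᵐ x, x ∈ Set.Ioc c d → f x = 0 :=
  ae_imp_of_ae_restrict ((intervalIntegral.integral_eq_zero_iff_of_le_of_nonneg_ae hcd
    (ae_of_all _ hf.nonneg) (hf.intervalIntegrable _ _)).1 (h.antisymm (hf.integral_nonneg hcd)))

/- Both functions are `1` on the window and vanish off it, up to null sets. -/
theorem ae_eq_of_le_windowMass (hf : IsPeriodicDensity T f) (hg : IsPeriodicDensity T g)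
    (hT : 0 < T) (ha₀ : 0 ≤ a) (ha : 2 * a ≤ T) (hfa : ∫ x in 0..T, f x = 2 * a)
    (hga : ∫ x in 0..T, g x = 2 * a) {c : ℝ} (hfc : 2 * a ≤ windowMass f a c)
    (hgc : 2 * a ≤ windowMass g a c) : f =ᵐ[volume] g := by
  have hsplit {h : ℝ → ℝ} (hh : IsPeriodicDensity T h) (hha : ∫ x in 0..T, h x = 2 * a)
      (hhc : 2 * a ≤ windowMass h a c) :
      (∀ᵐ x, x ∈ Set.Ioc (c - a) (c + a) → h x = 1) ∧
        ∀ᵐ x, x ∈ Set.Ioc (c + a) (c - a + T) → h x = 0 := by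
    have hadd := hh.integral_add (c - a) (c + a) (c - a + T)
    rw [hh.integral_period, hha] at hadd
    rw [windowMass] at hhc
    exact ⟨hh.ae_eq_one_of_le_integral (by linarith) (by linarith),
      hh.ae_eq_zero_of_integral_le (by linarith) (by linarith)⟩
  obtain ⟨hf₁, hf₀⟩ := hsplit hf hfa hfc
  obtain ⟨hg₁, hg₀⟩ := hsplit hg hga hgc
  refine ae_of_periodic_of_ae_mem_Ioc hT (fun x ↦ by simp only [hf.periodic x, hg.periodic x])
    (c - a) ?_
  filter_upwards [hf₁, hf₀, hg₁, hg₀] with x hf₁ hf₀ hg₁ hg₀ hx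
  rcases le_or_gt x (c + a) with hxc | hxc
  · rw [hf₁ ⟨hx.1, hxc⟩, hg₁ ⟨hx.1, hxc⟩]
  · rw [hf₀ ⟨hxc, hx.2⟩, hg₀ ⟨hxc, hx.2⟩]

theorem ae_eq_arc_of_le_windowMass (hf : IsPeriodicDensity (2 * π) f) (ha₀ : 0 ≤ a) (ha : a ≤ π)
    (hfa : ∫ x in 0..2 * π, f x = 2 * a) {c : ℝ} (hc : 2 * a ≤ windowMass f a c) :
    f =ᵐ[volume] fun x ↦ arc a (x - c) := by
  have harc := isPeriodicDensity_arc a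
  have hfull : 2 * a ≤ windowMass (arc a) a 0 := by
    simpa [two_mul] using le_windowMass_arc ha ha₀ 0
  simp only [sub_eq_add_neg]
  refine hf.ae_eq_of_le_windowMass (harc.comp_add_const (-c)) two_pi_pos ha₀ (by linarith) hfa ?_
    hc ?_
  · rw [integral_comp_add_const_of_periodic harc.periodic, integral_arc ha₀ ha]
  · rwa [windowMass_comp_add_const, add_neg_cancel]

/- If every window of radius `a` missed more than `t`, the complementary windows, of radius
`T / 2 - a`, would all have mass larger than `t`; the chord of the capped mass between `t / 2` and
`T / 2 - a` would then lie above the assumed bound. -/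
theorem exists_sub_le_windowMass (hf : IsPeriodicDensity T f) (hT : 0 ≤ T)
    (hfa : ∫ x in 0..T, f x = 2 * a) (ht : 0 < t) (htρ : t < 2 * ρ) (hρ : 2 * ρ < T - 2 * a)
    (hcap : cappedMass T f t ρ ≤ t * (2 * a + 2 * ρ - t)) :
    ∃ y, 2 * a - t ≤ windowMass f a y := by
  by_contra! hsmall
  have hcomplement (y : ℝ) : t ≤ windowMass f (T / 2 - a) y := by
    have hadd := hf.integral_add (y - (T / 2 - a)) (y + (T / 2 - a)) (y - (T / 2 - a) + T)
    have hwindow := hsmall (y + T / 2)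
    rw [hf.integral_period, hfa] at hadd
    rw [windowMass, show y + T / 2 - a = y + (T / 2 - a) by ring,
      show y + T / 2 + a = y - (T / 2 - a) + T by ring] at hwindow
    rw [windowMass]
    linarith
  have hfull : cappedMass T f t (T / 2 - a) = T * t := by
    simp [cappedMass, min_eq_right (hcomplement _)]
  have hslope := (hf.concaveOn_cappedMass hT t).slope_anti_adjacent (x := t / 2) (y := ρ)
    (z := T / 2 - a) trivial trivial (by linarith) (by linarith)
  rw [hfull, hf.cappedMass_half hT ht.le, hfa, div_le_div_iff₀ (by linarith) (by linarith)]
    at hslope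
  have hgap : 0 < t * t * (ρ - t / 2) := mul_pos (mul_pos ht ht) (by linarith)
  nlinarith

theorem exists_forall_windowMass_le (hf : IsPeriodicDensity T f) (hT : 0 < T) (ρ : ℝ) :
    ∃ c, ∀ y, windowMass f ρ y ≤ windowMass f ρ c := by
  obtain ⟨-, ⟨c, rfl⟩, hc⟩ := ((windowMass_periodic hf.periodic ρ).compact_of_continuous hT.ne'
    (hf.continuous_windowMass ρ)).exists_isGreatest (Set.range_nonempty _)
  exact ⟨c, fun y ↦ hc ⟨y, rfl⟩⟩

theorem ae_eq_one_of_excess_outside_le (hf : IsPeriodicDensity T f) (hg : IsPeriodicDensity T g)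
    (hT : 0 < T)
    (h : ∫ y in 0..T, (1 - g y) * (windowMass f ρ y - min (windowMass f ρ y) t) ≤ 0) :
    ∀ᵐ y, t < windowMass f ρ y → g y = 1 := by
  have hzero := (intervalIntegral.integral_eq_zero_iff_of_le_of_nonneg_ae hT.le
    (ae_of_all _ fun y ↦ hg.excess_outside_nonneg ρ t y)
    (hf.intervalIntegrable_excess_outside hg ρ t 0 T)).1
      (h.antisymm (intervalIntegral.integral_nonneg hT.le fun y _ ↦
        hg.excess_outside_nonneg ρ t y))
  refine ae_of_periodic_of_ae_mem_Ioc hT (fun y ↦ by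
    simp only [hg.periodic y, windowMass_periodic hf.periodic ρ y]) 0 ?_
  rw [zero_add]
  filter_upwards [ae_imp_of_ae_restrict hzero] with y hy hmem hlt
  rw [min_eq_right hlt.le] at hy
  exact (sub_eq_zero.1 ((mul_eq_zero.1 (hy hmem)).resolve_right (sub_pos.2 hlt).ne')).symm

end IsPeriodicDensity

end Rigidity

section EqualityCase

open scoped Topology

variable {a b t ρ : ℝ} {f g : ℝ → ℝ}

theorem arcLevel_sub_add (hab : a ≤ b) (ht : 0 ≤ t) (hta : t ≤ 2 * a) (htb : t ≤ π - b) :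
    arcLevel a b (b - a + t) = t := by
  rw [arcLevel, min_eq_left (le_min (by linarith) (by linarith)),
    max_eq_right (max_le (by linarith) (by linarith))]
  ring

namespace IsPeriodicDensity

theorem cappedMass_le_and_excess_outside_le (hf : IsPeriodicDensity (2 * π) f)
    (hg : IsPeriodicDensity (2 * π) g) (ha₀ : 0 ≤ a) (ha : a ≤ π) (hb₀ : 0 ≤ b) (hb : b ≤ π)
    (hρ₀ : 0 ≤ ρ) (hρ : ρ ≤ π) (hfa : ∫ x in 0..2 * π, f x = 2 * a)
    (hgb : ∫ x in 0..2 * π, g x = 2 * b) (ht : arcLevel a b ρ = t)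
    (h : leakage (2 * π) f g ρ ≤ leakage (2 * π) (arc a) (arc b) ρ) :
    cappedMass (2 * π) f t ρ ≤ t * (2 * a + 2 * ρ - t) ∧
      ∫ y in 0..2 * π, (1 - g y) * (windowMass f ρ y - min (windowMass f ρ y) t) ≤ 0 := by
  have harc := leakage_arc_le ha₀ ha hb₀ hb hρ₀ hρ
  have hchord := hf.mul_arcLevel_le_cappedMass ha₀ ha hρ₀ hρ hfa b
  have hout := intervalIntegral.integral_nonneg (μ := volume) two_pi_pos.le fun y _ ↦
    hg.excess_outside_nonneg (f := f) ρ t y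
  have hin := intervalIntegral.integral_nonneg (μ := volume) two_pi_pos.le fun y _ ↦
    hg.deficit_inside_nonneg (f := f) ρ t y
  rw [hf.leakage_eq hg ρ t, hgb] at h
  rw [ht] at harc hchord
  constructor <;> linarith

/- For a radius just above `b - a` the critical level `t` is small, and a window of radius `a`
misses at most `t` of the mass of `f`. -/
theorem exists_le_windowMass_of_frequently (hf : IsPeriodicDensity (2 * π) f)
    (hg : IsPeriodicDensity (2 * π) g) (ha : 0 < a) (hab : a ≤ b) (hb : b < π)
    (hfa : ∫ x in 0..2 * π, f x = 2 * a) (hgb : ∫ x in 0..2 * π, g x = 2 * b)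
    (h : ∃ᶠ ρ in 𝓝[>] (b - a), leakage (2 * π) f g ρ ≤ leakage (2 * π) (arc a) (arc b) ρ) :
    ∃ c, 2 * a ≤ windowMass f a c := by
  obtain ⟨c, hc⟩ := hf.exists_forall_windowMass_le two_pi_pos a
  refine ⟨c, le_of_forall_pos_sub_le fun ε hε ↦ ?_⟩
  obtain ⟨ρ, hle, hρ⟩ := (h.and_eventually (Ioo_mem_nhdsGT
    (lt_add_of_pos_right (b - a) (lt_min hε (lt_min (mul_pos two_pos ha) (sub_pos.2 hb)))))).exists
  obtain ⟨hρε, hρa, hρb⟩ : ρ - (b - a) < ε ∧ ρ - (b - a) < 2 * a ∧ ρ - (b - a) < π - b := by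
    simpa only [lt_min_iff] using sub_lt_iff_lt_add'.2 hρ.2
  have hρ₀ : b - a < ρ := hρ.1
  have hlevel : arcLevel a b ρ = ρ - (b - a) := by
    simpa using arcLevel_sub_add hab (sub_pos.2 hρ₀).le hρa.le hρb.le
  obtain ⟨hcap, -⟩ := hf.cappedMass_le_and_excess_outside_le hg ha.le (by linarith)
    (by linarith) hb.le (by linarith) (by linarith) hfa hgb hlevel hle
  obtain ⟨y, hy⟩ := hf.exists_sub_le_windowMass two_pi_pos.le hfa (sub_pos.2 hρ₀)
    (by linarith) (by linarith) hcap
  linarith [hc y]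

theorem ae_eq_arc_of_leakage_le (hg : IsPeriodicDensity (2 * π) g) (hab : a ≤ b) (hb : b < π)
    (hgb : ∫ x in 0..2 * π, g x = 2 * b) (ht₀ : 0 < t) (hta : t < 2 * a) (htb : t < π - b)
    (h : leakage (2 * π) (arc a) g (b - a + t) ≤ leakage (2 * π) (arc a) (arc b) (b - a + t)) :
    g =ᵐ[volume] arc b := by
  have harc := isPeriodicDensity_arc a
  have hexcess := (harc.cappedMass_le_and_excess_outside_le hg (by linarith) (by linarith)
    (by linarith) hb.le (by linarith) (by linarith) (integral_arc (by linarith) (by linarith)) hgb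
    (arcLevel_sub_add hab ht₀.le hta.le htb.le) h).2
  have hlarge (y : ℝ) (hy : y ∈ Set.Ioo (-b) b) : t < windowMass (arc a) (b - a + t) y := by
    refine lt_of_lt_of_le ?_ (le_windowMass_arc (by linarith) (by linarith) y)
    rcases min_cases (y + (b - a + t)) a with ⟨h, -⟩ | ⟨h, -⟩ <;>
      rcases max_cases (y - (b - a + t)) (-a) with ⟨h', -⟩ | ⟨h', -⟩ <;> linarith [hy.1, hy.2]
  have hone : ∀ᵐ y, y ∈ Set.Ioc (-b) b → g y = 1 := by
    filter_upwards [harc.ae_eq_one_of_excess_outside_le hg two_pi_pos hexcess,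
      Measure.ae_ne volume b] with y hy hyb hmem
    exact hy (hlarge y ⟨hmem.1, hmem.2.lt_of_ne hyb⟩)
  have hfull : windowMass g b 0 = 2 * b := by
    rw [windowMass, zero_sub, zero_add, intervalIntegral.integral_congr_ae (g := fun _ ↦ 1)
      (by rwa [Set.uIoc_of_le (by linarith)])]
    simp [two_mul]
  simpa using hg.ae_eq_arc_of_le_windowMass (by linarith) hb.le hgb hfull.ge

theorem ae_eq_arc_of_frequently_leakage_le (hf : IsPeriodicDensity (2 * π) f)
    (hg : IsPeriodicDensity (2 * π) g) (ha : 0 < a) (hab : a ≤ b) (hb : b < π)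
    (hfa : ∫ x in 0..2 * π, f x = 2 * a) (hgb : ∫ x in 0..2 * π, g x = 2 * b)
    (h : ∃ᶠ ρ in 𝓝[>] (b - a), leakage (2 * π) f g ρ ≤ leakage (2 * π) (arc a) (arc b) ρ) :
    ∃ c, (f =ᵐ[volume] fun x ↦ arc a (x - c)) ∧ g =ᵐ[volume] fun x ↦ arc b (x - c) := by
  obtain ⟨c, hc⟩ := hf.exists_le_windowMass_of_frequently hg ha hab hb hfa hgb h
  have hfarc := hf.ae_eq_arc_of_le_windowMass ha.le (by linarith) hfa hc
  refine ⟨c, hfarc, ?_⟩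
  have hfshift : (fun x ↦ f (x + c)) =ᵐ[volume] arc a := by
    filter_upwards [ae_comp_add_const hfarc c] with x hx
    rw [hx, add_sub_cancel_right]
  obtain ⟨ρ, hle, hρ⟩ := (h.and_eventually (Ioo_mem_nhdsGT
    (lt_add_of_pos_right (b - a) (lt_min (mul_pos two_pos ha) (sub_pos.2 hb))))).exists
  obtain ⟨hρa, hρb⟩ := lt_min_iff.1 (sub_lt_iff_lt_add'.2 hρ.2)
  rw [← add_sub_cancel (b - a) ρ, ← hf.leakage_comp_add_const hg c,
    leakage_congr_ae hfshift (Filter.EventuallyEq.refl _ _)] at hle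
  have hgshift := (hg.comp_add_const c).ae_eq_arc_of_leakage_le hab hb
    ((integral_comp_add_const_of_periodic hg.periodic c).trans hgb) (sub_pos.2 hρ.1) hρa hρb hle
  filter_upwards [ae_comp_add_const hgshift (-c)] with x hx
  simpa [sub_eq_add_neg] using hx

theorem ae_eq_arc_zero (hf : IsPeriodicDensity (2 * π) f) (hfa : ∫ x in 0..2 * π, f x = 0)
    (c : ℝ) : f =ᵐ[volume] fun x ↦ arc 0 (x - c) :=
  hf.ae_eq_arc_of_le_windowMass le_rfl pi_pos.le (by simpa using hfa) (by simp [windowMass])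

theorem ae_eq_arc_pi (hf : IsPeriodicDensity (2 * π) f) (hfa : ∫ x in 0..2 * π, f x = 2 * π)
    (c : ℝ) : f =ᵐ[volume] fun x ↦ arc π (x - c) :=
  hf.ae_eq_arc_of_le_windowMass pi_pos.le le_rfl hfa (by
    rw [windowMass, show c + π = c - π + 2 * π by ring, hf.integral_period, hfa])

end IsPeriodicDensity

theorem arc_sub_eq_of_ae_eq {α β : ℝ} (ha₀ : 0 < a) (ha : a < π)
    (h : (fun x ↦ arc a (x - α)) =ᵐ[volume] fun x ↦ arc a (x - β)) (b x : ℝ) :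
    arc b (x - α) = arc b (x - β) := by
  have harc := isPeriodicDensity_arc a
  obtain ⟨k, hk, -⟩ := existsUnique_add_zsmul_mem_Ico two_pi_pos (α - β) 0
  set δ := α - β + k • (2 * π)
  have hfull : 2 * a ≤ windowMass (arc a) a δ := by
    have hmass : windowMass (arc a) a 0 = windowMass (arc a) a δ := by
      have := windowMass_congr_ae h a α
      simp only [sub_eq_add_neg, windowMass_comp_add_const] at this
      rwa [add_neg_cancel, ← sub_eq_add_neg,
        ← (windowMass_periodic harc.periodic a).zsmul k (α - β)] at this
    rw [← hmass]
    simpa [two_mul] using le_windowMass_arc ha.le ha₀.le 0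
  have hδ : δ = 0 := by
    have hoverlap := hfull.trans (windowMass_arc_le ha₀.le ha.le ha₀.le δ)
    by_contra hne
    have hpos : 0 < δ := lt_of_le_of_ne hk.1 (Ne.symm hne)
    rcases max_cases (a + a - δ) 0 with h | h <;>
      rcases max_cases (δ - (2 * π - a - a)) 0 with h' | h' <;> linarith [hk.2]
  rw [← (isPeriodicDensity_arc b).periodic.zsmul k (x - β)]
  congr 1
  linarith

end EqualityCase

/-! ### Interaction energies on the circle -/

section LayerCake

theorem volume_restrict_Ioi_ofReal_lt (c : ℝ≥0∞) :
    volume.restrict (Set.Ioi (0 : ℝ)) {l | ENNReal.ofReal l < c} = c := by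
  rw [Measure.restrict_apply (measurableSet_lt ENNReal.measurable_ofReal measurable_const)]
  induction c using ENNReal.recTopCoe with
  | top => simp [ENNReal.ofReal_lt_top]
  | coe c =>
    have hset : {l : ℝ | ENNReal.ofReal l < c} ∩ Set.Ioi 0 = Set.Ioo 0 (c : ℝ) := by
      ext l
      exact and_comm.trans (and_congr_right fun hl ↦ ENNReal.ofReal_lt_coe_iff (le_of_lt hl))
    simp [hset]

theorem lintegral_eq_lintegral_measure_ofReal_lt {X : Type*} [MeasurableSpace X] (μ : Measure X)
    [SFinite μ] {F : X → ℝ≥0∞} (hF : Measurable F) :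
    ∫⁻ x, F x ∂μ = ∫⁻ l in Set.Ioi (0 : ℝ), μ {x | ENNReal.ofReal l < F x} := by
  have hset : MeasurableSet {q : X × ℝ | ENNReal.ofReal q.2 < F q.1} :=
    measurableSet_lt (by fun_prop) (by fun_prop)
  have hprod := (Measure.prod_apply (μ := μ) (ν := volume.restrict (Set.Ioi 0)) hset).symm.trans
    (Measure.prod_apply_symm hset)
  simpa only [Set.preimage_ofPred_eq, volume_restrict_Ioi_ofReal_lt] using hprod

theorem exists_ofReal_mem_Ioo_of_ae {P : ℝ → Prop} (hP : ∀ᵐ l, P l) {A B : ℝ≥0∞} (hAB : A < B) :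
    ∃ l, P l ∧ A < ENNReal.ofReal l ∧ ENNReal.ofReal l < B := by
  obtain ⟨x, hAx, hxB⟩ := ENNReal.lt_iff_exists_nnreal_btwn.1 hAB
  obtain ⟨y, hxy, hyB⟩ := ENNReal.lt_iff_exists_nnreal_btwn.1 hxB
  obtain ⟨l, hl, hxl, hly⟩ := (Measure.dense_of_ae hP).exists_between
    (NNReal.coe_lt_coe.2 (ENNReal.coe_lt_coe.1 hxy))
  refine ⟨l, hl, hAx.trans ?_, lt_trans ?_ hyB⟩
  · exact (ENNReal.lt_ofReal_iff_toReal_lt ENNReal.coe_ne_top).2 hxl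
  · exact (ENNReal.ofReal_lt_coe_iff (x.coe_nonneg.trans hxl.le)).2 hly

end LayerCake

section SuperlevelRadius

variable {K : ℝ → ℝ≥0∞} {l z : ℝ}

/-- The radius of the superlevel set `{l < K}` of a kernel on the circle which decreases with the
distance to `0`; it is `0` when the superlevel set is empty. -/
noncomputable def superlevelRadius (K : ℝ → ℝ≥0∞) (l : ℝ) : ℝ :=
  sSup (insert 0 {z ∈ Set.Ioo 0 π | ENNReal.ofReal l < K z})

theorem bddAbove_superlevel (K : ℝ → ℝ≥0∞) (l : ℝ) :
    BddAbove (insert 0 {z ∈ Set.Ioo 0 π | ENNReal.ofReal l < K z}) :=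
  (bddAbove_Ioo.mono (Set.sep_subset _ _)).insert 0

theorem superlevelRadius_nonneg (K : ℝ → ℝ≥0∞) (l : ℝ) : 0 ≤ superlevelRadius K l :=
  le_csSup (bddAbove_superlevel K l) (Set.mem_insert _ _)

theorem superlevelRadius_le_pi (K : ℝ → ℝ≥0∞) (l : ℝ) : superlevelRadius K l ≤ π :=
  csSup_le (Set.insert_nonempty _ _) <| Set.forall_mem_insert.2 ⟨pi_pos.le, fun _ hz ↦ hz.1.2.le⟩

theorem antitone_superlevelRadius (K : ℝ → ℝ≥0∞) : Antitone (superlevelRadius K) := fun _ _ hl ↦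
  csSup_le_csSup (bddAbove_superlevel K _) (Set.insert_nonempty _ _) <| Set.insert_subset_insert
    fun _ hz ↦ ⟨hz.1, (ENNReal.ofReal_le_ofReal hl).trans_lt hz.2⟩

theorem le_superlevelRadius (hz : z ∈ Set.Ioo 0 π) (hK : ENNReal.ofReal l < K z) :
    z ≤ superlevelRadius K l :=
  le_csSup (bddAbove_superlevel K l) (Set.mem_insert_of_mem _ ⟨hz, hK⟩)

theorem ofReal_lt_of_lt_superlevelRadius (hK : AntitoneOn K (Set.Ioo 0 π)) (hz : 0 < z)
    (h : z < superlevelRadius K l) : ENNReal.ofReal l < K z := by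
  obtain ⟨w, rfl | ⟨hw, hl⟩, hzw⟩ := exists_lt_of_lt_csSup (Set.insert_nonempty _ _) h
  · exact absurd hz hzw.not_gt
  · exact hl.trans_le (hK ⟨hz, hzw.trans hw.2⟩ hw hzw.le)

theorem superlevel_ae_eq_Ioo (hKe : K.Even) (hK : AntitoneOn K (Set.Ioo 0 π)) (l : ℝ) :
    ({z | ENNReal.ofReal l < K z} ∩ Set.Ioc (-π) π : Set ℝ) =ᵐ[volume]
      Set.Ioo (-superlevelRadius K l) (superlevelRadius K l) := by
  have hradius := superlevelRadius_le_pi K l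
  have habs (z : ℝ) : K |z| = K z := by
    rcases abs_choice z with h | h <;> simp [h, hKe z]
  filter_upwards [Measure.ae_ne volume 0, Measure.ae_ne volume π,
    Measure.ae_ne volume (superlevelRadius K l), Measure.ae_ne volume (-superlevelRadius K l)]
    with z hz₀ hzπ hzρ hzρ'
  refine propext (Iff.trans ?_ abs_lt)
  constructor
  · rintro ⟨hl, hz⟩
    refine (le_superlevelRadius ⟨abs_pos.2 hz₀, abs_lt.2 ⟨hz.1, hz.2.lt_of_ne hzπ⟩⟩
      (by rwa [habs])).lt_of_ne fun h ↦ ?_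
    rcases eq_or_eq_neg_of_abs_eq h with h | h
    exacts [hzρ h, hzρ' h]
  · intro h
    obtain ⟨hz₁, hz₂⟩ := abs_lt.1 h
    have hl := ofReal_lt_of_lt_superlevelRadius hK (abs_pos.2 hz₀) h
    exact ⟨by rwa [habs] at hl, by linarith, by linarith⟩

end SuperlevelRadius

/-- The probability that independent random bits with means `a` and `b` differ; it is `|a - b|`
for `a, b ∈ {0, 1}`. -/
noncomputable def mismatch (a b : ℝ) : ℝ := a * (1 - b) + (1 - a) * b

/-- The interaction energy of two densities on the circle `ℝ / 2πℤ` through the convolution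
kernel `K`. -/
noncomputable def circleEnergy (K : ℝ → ℝ≥0∞) (f g : ℝ → ℝ) : ℝ≥0∞ :=
  ∫⁻ z in Set.Ioc (-π) π, (∫⁻ x in Set.Ioc (-π) π, ENNReal.ofReal (mismatch (f x) (g (x + z)))) *
    K z

/-- The mismatch of two densities on the circle over pairs of points at distance at most `ρ`. -/
noncomputable def windowMismatch (f g : ℝ → ℝ) (ρ : ℝ) : ℝ :=
  ∫ z in -ρ..ρ, ∫ x in -π..π, mismatch (f x) (g (x + z))

section Energy

variable {K : ℝ → ℝ≥0∞} {ρ : ℝ} {f g : ℝ → ℝ}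

namespace IsPeriodicDensity

theorem mismatch_mem_Icc {T : ℝ} (hf : IsPeriodicDensity T f) (hg : IsPeriodicDensity T g)
    (x y : ℝ) : mismatch (f x) (g y) ∈ Set.Icc 0 1 := by
  have hfx := hf.mem_Icc x
  have hgy := hg.mem_Icc y
  rw [mismatch]
  constructor
  · exact add_nonneg (mul_nonneg hfx.1 (sub_nonneg.2 hgy.2)) (mul_nonneg (sub_nonneg.2 hfx.2) hgy.1)
  · nlinarith [mul_le_mul_of_nonneg_left hgy.2 (sub_nonneg.2 hfx.2),
      mul_nonneg hfx.1 hgy.1]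

theorem measurable_mismatch {T : ℝ} (hf : IsPeriodicDensity T f) (hg : IsPeriodicDensity T g) :
    Measurable fun q : ℝ × ℝ ↦ mismatch (f q.2) (g (q.2 + q.1)) := by
  have := hf.measurable
  have := hg.measurable
  unfold mismatch
  fun_prop

theorem integrable_mismatch {T : ℝ} (hf : IsPeriodicDensity T f) (hg : IsPeriodicDensity T g)
    (μ : Measure (ℝ × ℝ)) [IsFiniteMeasure μ] :
    Integrable (fun q : ℝ × ℝ ↦ mismatch (f q.2) (g (q.2 + q.1))) μ :=
  Integrable.of_bound (hf.measurable_mismatch hg).aestronglyMeasurable 1 <| ae_of_all _ fun _ ↦ by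
    have hmem := hf.mismatch_mem_Icc hg
    exact (Real.norm_of_nonneg (hmem _ _).1).trans_le (hmem _ _).2

theorem windowMismatch_nonneg {T : ℝ} (hf : IsPeriodicDensity T f) (hg : IsPeriodicDensity T g)
    (hρ : 0 ≤ ρ) : 0 ≤ windowMismatch f g ρ :=
  intervalIntegral.integral_nonneg (by linarith) fun _ _ ↦
    intervalIntegral.integral_nonneg (by linarith [pi_pos]) fun _ _ ↦ (hf.mismatch_mem_Icc hg _ _).1

theorem setLIntegral_mismatch {T : ℝ} (hf : IsPeriodicDensity T f) (hg : IsPeriodicDensity T g)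
    (hρ : 0 ≤ ρ) :
    ∫⁻ z in Set.Ioo (-ρ) ρ, ∫⁻ x in Set.Ioc (-π) π, ENNReal.ofReal (mismatch (f x) (g (x + z))) =
      ENNReal.ofReal (windowMismatch f g ρ) := by
  have hint := hf.integrable_mismatch hg
    ((volume.restrict (Set.Ioo (-ρ) ρ)).prod (volume.restrict (Set.Ioc (-π) π)))
  have hiterated : windowMismatch f g ρ = ∫ q, mismatch (f q.2) (g (q.2 + q.1))
      ∂(volume.restrict (Set.Ioo (-ρ) ρ)).prod (volume.restrict (Set.Ioc (-π) π)) := by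
    rw [integral_prod _ hint, windowMismatch, intervalIntegral.integral_of_le (by linarith),
      integral_Ioc_eq_integral_Ioo]
    simp only [intervalIntegral.integral_of_le (neg_le_self pi_pos.le)]
  rw [hiterated, ofReal_integral_eq_lintegral_ofReal hint
    (ae_of_all _ fun q ↦ (hf.mismatch_mem_Icc hg _ _).1),
    lintegral_prod _ (hf.measurable_mismatch hg).ennreal_ofReal.aemeasurable]

theorem integral_mismatch_comp_add {T : ℝ} (hg : IsPeriodicDensity T g) (c ρ x : ℝ) :
    ∫ z in -ρ..ρ, mismatch c (g (x + z)) =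
      2 * ρ * c + (2 * ((1 - c) * windowMass g ρ x) - windowMass g ρ x) := by
  have hgx : IntervalIntegrable (fun z ↦ g (z + x)) volume (-ρ) ρ :=
    (hg.comp_add_const x).intervalIntegrable _ _
  have hlinear (z : ℝ) : mismatch c (g (x + z)) = c + (1 - 2 * c) * g (z + x) := by
    rw [mismatch, add_comm x z]
    ring
  simp only [hlinear]
  rw [intervalIntegral.integral_add intervalIntegrable_const (hgx.const_mul _),
    intervalIntegral.integral_const_mul, intervalIntegral.integral_const,
    intervalIntegral.integral_comp_add_right, windowMass, neg_add_eq_sub, add_comm ρ x,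
    smul_eq_mul]
  ring

theorem windowMismatch_eq (hf : IsPeriodicDensity (2 * π) f) (hg : IsPeriodicDensity (2 * π) g)
    (hρ : 0 ≤ ρ) : windowMismatch f g ρ = 2 * leakage (2 * π) g f ρ +
      2 * ρ * ((∫ x in 0..2 * π, f x) - ∫ x in 0..2 * π, g x) := by
  have hwindow : IntervalIntegrable (windowMass g ρ) volume 0 (2 * π) :=
    (hg.continuous_windowMass ρ).intervalIntegrable _ _
  have hleak : IntervalIntegrable (fun x ↦ (1 - f x) * windowMass g ρ x) volume 0 (2 * π) :=
    (intervalIntegrable_const.sub (hf.intervalIntegrable _ _)).mul_continuousOn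
      (hg.continuous_windowMass ρ).continuousOn
  calc windowMismatch f g ρ
      = ∫ x in -π..π, ∫ z in -ρ..ρ, mismatch (f x) (g (x + z)) := by
        refine intervalIntegral_intervalIntegral_swap ?_
        rw [IntegrableOn, Measure.volume_eq_prod, ← Measure.prod_restrict,
          Set.uIoc_of_le (by linarith), Set.uIoc_of_le (by linarith [pi_pos])]
        exact hf.integrable_mismatch hg _
    _ = ∫ x in 0..2 * π, (2 * ρ * f x +
          (2 * ((1 - f x) * windowMass g ρ x) - windowMass g ρ x)) := by
        simp only [hg.integral_mismatch_comp_add]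
        have hper : Function.Periodic (fun x ↦ 2 * ρ * f x +
            (2 * ((1 - f x) * windowMass g ρ x) - windowMass g ρ x)) (2 * π) := fun x ↦ by
          simp only [hf.periodic x, windowMass_periodic hg.periodic ρ x]
        simpa [show -π + 2 * π = π by ring] using hper.intervalIntegral_add_eq (-π) 0
    _ = _ := by
        rw [intervalIntegral.integral_add ((hf.intervalIntegrable _ _).const_mul _)
          ((hleak.const_mul 2).sub hwindow), intervalIntegral.integral_sub (hleak.const_mul 2)
          hwindow, hg.integral_windowMass two_pi_pos.le hρ, intervalIntegral.integral_const_mul,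
          intervalIntegral.integral_const_mul, leakage]
        ring

theorem circleEnergy_eq (hf : IsPeriodicDensity (2 * π) f) (hg : IsPeriodicDensity (2 * π) g)
    (hKm : Measurable K) (hKe : K.Even) (hK : AntitoneOn K (Set.Ioo 0 π)) :
    circleEnergy K f g =
      ∫⁻ l in Set.Ioi (0 : ℝ), ENNReal.ofReal (windowMismatch f g (superlevelRadius K l)) := by
  set D : ℝ → ℝ≥0∞ := fun z ↦
    ∫⁻ x in Set.Ioc (-π) π, ENNReal.ofReal (mismatch (f x) (g (x + z)))
  have hD : Measurable D := (hf.measurable_mismatch hg).ennreal_ofReal.lintegral_prod_right'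
  calc circleEnergy K f g = ∫⁻ z, K z ∂(volume.restrict (Set.Ioc (-π) π)).withDensity D :=
        (lintegral_withDensity_eq_lintegral_mul _ hD hKm).symm
    _ = ∫⁻ l in Set.Ioi (0 : ℝ), (volume.restrict (Set.Ioc (-π) π)).withDensity D
          {z | ENNReal.ofReal l < K z} := lintegral_eq_lintegral_measure_ofReal_lt _ hKm
    _ = ∫⁻ l in Set.Ioi (0 : ℝ), ENNReal.ofReal (windowMismatch f g (superlevelRadius K l)) := by
        refine lintegral_congr fun l ↦ ?_
        have hset : MeasurableSet {z | ENNReal.ofReal l < K z} :=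
          measurableSet_lt measurable_const hKm
        rw [withDensity_apply _ hset, Measure.restrict_restrict hset,
          Measure.restrict_congr_set (superlevel_ae_eq_Ioo hKe hK l),
          hf.setLIntegral_mismatch hg (superlevelRadius_nonneg K l)]

end IsPeriodicDensity

end Energy

section EnergyMinimizers

open scoped Topology

variable {K : ℝ → ℝ≥0∞} {a b ρ : ℝ} {f g : ℝ → ℝ}

namespace IsPeriodicDensity

theorem half_integral_mem_Icc (hf : IsPeriodicDensity (2 * π) f)
    (hfa : ∫ x in 0..2 * π, f x = 2 * a) : a ∈ Set.Icc 0 π := by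
  have hnonneg := hf.integral_nonneg two_pi_pos.le
  have hle := hf.integral_le_sub two_pi_pos.le
  constructor <;> linarith

theorem windowMismatch_arc_le (hf : IsPeriodicDensity (2 * π) f)
    (hg : IsPeriodicDensity (2 * π) g) (hfa : ∫ x in 0..2 * π, f x = 2 * a)
    (hgb : ∫ x in 0..2 * π, g x = 2 * b) (hρ₀ : 0 ≤ ρ) (hρ : ρ ≤ π) :
    windowMismatch (arc a) (arc b) ρ ≤ windowMismatch f g ρ := by
  obtain ⟨ha₀, ha⟩ := hf.half_integral_mem_Icc hfa
  obtain ⟨hb₀, hb⟩ := hg.half_integral_mem_Icc hgb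
  have hleak := hg.leakage_arc_le_leakage hf hb₀ hb ha₀ ha hρ₀ hρ hgb hfa
  rw [hf.windowMismatch_eq hg hρ₀, (isPeriodicDensity_arc a).windowMismatch_eq
    (isPeriodicDensity_arc b) hρ₀, hfa, hgb, integral_arc ha₀ ha, integral_arc hb₀ hb]
  linarith

theorem circleEnergy_arc_le (hf : IsPeriodicDensity (2 * π) f)
    (hg : IsPeriodicDensity (2 * π) g) (hKm : Measurable K) (hKe : K.Even)
    (hK : AntitoneOn K (Set.Ioo 0 π)) (hfa : ∫ x in 0..2 * π, f x = 2 * a)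
    (hgb : ∫ x in 0..2 * π, g x = 2 * b) :
    circleEnergy K (arc a) (arc b) ≤ circleEnergy K f g := by
  rw [hf.circleEnergy_eq hg hKm hKe hK,
    (isPeriodicDensity_arc a).circleEnergy_eq (isPeriodicDensity_arc b) hKm hKe hK]
  exact lintegral_mono fun l ↦ ENNReal.ofReal_le_ofReal <| hf.windowMismatch_arc_le hg hfa hgb
    (superlevelRadius_nonneg K l) (superlevelRadius_le_pi K l)

theorem circleEnergy_congr_comp_add_const {f' g' : ℝ → ℝ} (hf : IsPeriodicDensity (2 * π) f)
    (hg : IsPeriodicDensity (2 * π) g) (hf' : IsPeriodicDensity (2 * π) f')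
    (hg' : IsPeriodicDensity (2 * π) g') (hKm : Measurable K) (hKe : K.Even)
    (hK : AntitoneOn K (Set.Ioo 0 π)) {c : ℝ} (hff' : f =ᵐ[volume] fun x ↦ f' (x + c))
    (hgg' : g =ᵐ[volume] fun x ↦ g' (x + c)) : circleEnergy K f g = circleEnergy K f' g' := by
  have hmass {h h' : ℝ → ℝ} (hh' : IsPeriodicDensity (2 * π) h')
      (hae : h =ᵐ[volume] fun x ↦ h' (x + c)) :
      ∫ x in 0..2 * π, h x = ∫ x in 0..2 * π, h' x :=
    (intervalIntegral.integral_congr_ae (hae.mono fun x hx _ ↦ hx)).trans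
      (integral_comp_add_const_of_periodic hh'.periodic c)
  rw [hf.circleEnergy_eq hg hKm hKe hK, hf'.circleEnergy_eq hg' hKm hKe hK]
  refine lintegral_congr fun l ↦ congrArg ENNReal.ofReal ?_
  have hρ := superlevelRadius_nonneg K l
  rw [hf.windowMismatch_eq hg hρ, hf'.windowMismatch_eq hg' hρ, leakage_congr_ae hgg' hff',
    hg'.leakage_comp_add_const hf', hmass hf' hff', hmass hg' hgg']

theorem measurable_windowMismatch_superlevelRadius {T : ℝ} (hf : IsPeriodicDensity T f)
    (hg : IsPeriodicDensity T g) (K : ℝ → ℝ≥0∞) :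
    Measurable fun l ↦ ENNReal.ofReal (windowMismatch f g (superlevelRadius K l)) := by
  refine Antitone.measurable fun l l' hl ↦ ?_
  rw [← hf.setLIntegral_mismatch hg (superlevelRadius_nonneg K l),
    ← hf.setLIntegral_mismatch hg (superlevelRadius_nonneg K l')]
  have hradius := antitone_superlevelRadius K hl
  exact lintegral_mono_set (Set.Ioo_subset_Ioo (neg_le_neg hradius) hradius)

theorem frequently_leakage_le_of_circleEnergy_le (hf : IsPeriodicDensity (2 * π) f)
    (hg : IsPeriodicDensity (2 * π) g) (hKm : Measurable K) (hKe : K.Even)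
    (hK : StrictAntiOn K (Set.Ioo 0 π)) (hfa : ∫ x in 0..2 * π, f x = 2 * a)
    (hgb : ∫ x in 0..2 * π, g x = 2 * b) (hfin : circleEnergy K f g ≠ ⊤)
    (hle : circleEnergy K f g ≤ circleEnergy K (arc a) (arc b)) (hρ₀ : 0 ≤ ρ) (hρ : ρ < π) :
    ∃ᶠ r in 𝓝[>] ρ, leakage (2 * π) g f r ≤ leakage (2 * π) (arc b) (arc a) r := by
  have hA := isPeriodicDensity_arc a
  have hB := isPeriodicDensity_arc b
  have hfin' := ne_top_of_le_ne_top hfin (hf.circleEnergy_arc_le hg hKm hKe hK.antitoneOn hfa hgb)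
  rw [hA.circleEnergy_eq hB hKm hKe hK.antitoneOn] at hle hfin'
  rw [hf.circleEnergy_eq hg hKm hKe hK.antitoneOn] at hle
  have hae := (ae_restrict_iff' measurableSet_Ioi).1 <| ae_eq_of_ae_le_of_lintegral_le
    (ae_of_all _ fun l ↦ ENNReal.ofReal_le_ofReal <| hf.windowMismatch_arc_le hg hfa hgb
      (superlevelRadius_nonneg K l) (superlevelRadius_le_pi K l)) hfin'
    (hf.measurable_windowMismatch_superlevelRadius hg K).aemeasurable hle
  refine (nhdsGT_basis ρ).frequently_iff.2 fun ε hε ↦ ?_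
  obtain ⟨d, hρd, hd⟩ := exists_between (lt_min hε hρ)
  obtain ⟨c, hρc, hcd⟩ := exists_between hρd
  obtain ⟨hdε, hdπ⟩ := lt_min_iff.1 hd
  have hc₀ := hρ₀.trans_lt hρc
  obtain ⟨l, hl, hdl, hlc⟩ := exists_ofReal_mem_Ioo_of_ae hae
    (hK ⟨hc₀, hcd.trans hdπ⟩ ⟨hc₀.trans hcd, hdπ⟩ hcd)
  have hcr : c ≤ superlevelRadius K l := le_superlevelRadius ⟨hc₀, hcd.trans hdπ⟩ hlc
  have hrd : superlevelRadius K l ≤ d := not_lt.1 fun h ↦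
    (ofReal_lt_of_lt_superlevelRadius hK.antitoneOn (hc₀.trans hcd) h).not_gt hdl
  refine ⟨_, ⟨hρc.trans_le hcr, hrd.trans_lt hdε⟩, ?_⟩
  have hr := superlevelRadius_nonneg K l
  have heq := (ENNReal.ofReal_eq_ofReal_iff (hA.windowMismatch_nonneg hB hr)
    (hf.windowMismatch_nonneg hg hr)).1 (hl (ENNReal.ofReal_pos.1 (bot_le.trans_lt hdl)))
  obtain ⟨ha₀, ha⟩ := hf.half_integral_mem_Icc hfa
  obtain ⟨hb₀, hb⟩ := hg.half_integral_mem_Icc hgb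
  rw [hA.windowMismatch_eq hB hr, hf.windowMismatch_eq hg hr, hfa, hgb, integral_arc ha₀ ha,
    integral_arc hb₀ hb] at heq
  linarith

theorem ae_eq_arc_of_circleEnergy_le (hf : IsPeriodicDensity (2 * π) f)
    (hg : IsPeriodicDensity (2 * π) g) (hKm : Measurable K) (hKe : K.Even)
    (hK : StrictAntiOn K (Set.Ioo 0 π)) (ha : 0 < a) (hab : a ≤ b) (hb : b < π)
    (hfa : ∫ x in 0..2 * π, f x = 2 * a) (hgb : ∫ x in 0..2 * π, g x = 2 * b)
    (hfin : circleEnergy K g f ≠ ⊤)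
    (hle : circleEnergy K g f ≤ circleEnergy K (arc b) (arc a)) :
    ∃ c, (f =ᵐ[volume] fun x ↦ arc a (x - c)) ∧ g =ᵐ[volume] fun x ↦ arc b (x - c) :=
  hf.ae_eq_arc_of_frequently_leakage_le hg ha hab hb hfa hgb <|
    hg.frequently_leakage_le_of_circleEnergy_le hf hKm hKe hK hgb hfa hfin hle
      (by linarith) (by linarith)

end IsPeriodicDensity

/- Any two slices which are proper arcs have the same centre, so comparing all slices with a single
proper one fixes the centre globally; empty and full slices are arcs around every centre. -/
theorem exists_forall_ae_eq_arc_of_circleEnergy_le {X : Type*} [MeasurableSpace X] {ν : Measure X}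
    [SFinite ν] {K : X × X → ℝ → ℝ≥0∞} {f : X → ℝ → ℝ} {a : X → ℝ} (hKm : ∀ q, Measurable (K q))
    (hKe : ∀ q, (K q).Even) (hK : ∀ q, StrictAntiOn (K q) (Set.Ioo 0 π))
    (hf : ∀ x, IsPeriodicDensity (2 * π) (f x)) (hfa : ∀ x, ∫ y in 0..2 * π, f x y = 2 * a x)
    (h : ∀ᵐ q ∂ν.prod ν, circleEnergy (K q) (f q.1) (f q.2) ≠ ⊤ ∧
      circleEnergy (K q) (f q.1) (f q.2) ≤ circleEnergy (K q) (arc (a q.1)) (arc (a q.2))) :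
    ∃ c, ∀ᵐ x ∂ν, f x =ᵐ[volume] fun t ↦ arc (a x) (t - c) := by
  have hmem (x : X) : a x ∈ Set.Icc 0 π := (hf x).half_integral_mem_Icc (hfa x)
  have htrivial (x : X) (c : ℝ) (hx : a x ∉ Set.Ioo 0 π) :
      f x =ᵐ[volume] fun t ↦ arc (a x) (t - c) := by
    have hmass := hfa x
    rcases Set.eq_endpoints_or_mem_Ioo_of_mem_Icc (hmem x) with hx₀ | hxπ | hx'
    · rw [hx₀] at hmass ⊢
      exact (hf x).ae_eq_arc_zero (by simpa using hmass) c
    · rw [hxπ] at hmass ⊢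
      exact (hf x).ae_eq_arc_pi hmass c
    · exact absurd hx' hx
  by_cases hproper : ∃ᵐ x ∂ν, a x ∈ Set.Ioo 0 π
  swap
  · exact ⟨0, (Filter.not_frequently.1 hproper).mono fun x ↦ htrivial x 0⟩
  obtain ⟨x₀, hx₀, hgood⟩ := (hproper.and_eventually (Measure.ae_ae_of_ae_prod
    (h.and (Measure.measurePreserving_swap.quasiMeasurePreserving.ae h)))).exists
  have hcentre : ∀ᵐ y ∂ν, a y ∈ Set.Ioo 0 π → ∃ c,
      (f x₀ =ᵐ[volume] fun t ↦ arc (a x₀) (t - c)) ∧ f y =ᵐ[volume] fun t ↦ arc (a y) (t - c) := by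
    filter_upwards [hgood] with y ⟨hxy, hyx⟩ hay
    rcases le_total (a x₀) (a y) with hle | hle
    · exact (hf x₀).ae_eq_arc_of_circleEnergy_le (hf y) (hKm _) (hKe _) (hK _) hx₀.1 hle hay.2
        (hfa x₀) (hfa y) hyx.1 hyx.2
    · obtain ⟨c, hyc, hxc⟩ := (hf y).ae_eq_arc_of_circleEnergy_le (hf x₀) (hKm _) (hKe _) (hK _)
        hay.1 hle hx₀.2 (hfa y) (hfa x₀) hxy.1 hxy.2
      exact ⟨c, hxc, hyc⟩
  obtain ⟨y₀, hy₀, hcentre₀⟩ := (hproper.and_eventually hcentre).exists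
  obtain ⟨c, hc, -⟩ := hcentre₀ hy₀
  refine ⟨c, hcentre.mono fun y hy ↦ ?_⟩
  by_cases hay : a y ∈ Set.Ioo 0 π
  · obtain ⟨c', hxc', hyc'⟩ := hy hay
    exact hyc'.trans (ae_of_all _ fun t ↦
      (arc_sub_eq_of_ae_eq hx₀.1 hx₀.2 (hc.symm.trans hxc') (a y) t).symm)
  · exact htrivial y c hay

theorem lintegral_circleEnergy_arc_eq_iff {X : Type*} [MeasurableSpace X] {ν : Measure X}
    [SFinite ν] {K : X × X → ℝ → ℝ≥0∞} {f : X → ℝ → ℝ} {a : X → ℝ} (hKm : ∀ q, Measurable (K q))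
    (hKe : ∀ q, (K q).Even) (hK : ∀ q, StrictAntiOn (K q) (Set.Ioo 0 π))
    (hf : ∀ x, IsPeriodicDensity (2 * π) (f x)) (hfa : ∀ x, ∫ y in 0..2 * π, f x y = 2 * a x)
    (hm : AEMeasurable (fun q ↦ circleEnergy (K q) (f q.1) (f q.2)) (ν.prod ν))
    (hfin : ∫⁻ q, circleEnergy (K q) (f q.1) (f q.2) ∂ν.prod ν ≠ ⊤) :
    ∫⁻ q, circleEnergy (K q) (arc (a q.1)) (arc (a q.2)) ∂ν.prod ν =
        ∫⁻ q, circleEnergy (K q) (f q.1) (f q.2) ∂ν.prod ν ↔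
      ∃ c, ∀ᵐ x ∂ν, f x =ᵐ[volume] fun t ↦ arc (a x) (t + c) := by
  constructor
  · intro heq
    have hmin : ∀ᵐ q ∂ν.prod ν, circleEnergy (K q) (arc (a q.1)) (arc (a q.2)) =
        circleEnergy (K q) (f q.1) (f q.2) :=
      ae_eq_of_ae_le_of_lintegral_le (ae_of_all _ fun q ↦ (hf q.1).circleEnergy_arc_le (hf q.2)
        (hKm q) (hKe q) (hK q).antitoneOn (hfa q.1) (hfa q.2)) (heq ▸ hfin) hm heq.ge
    obtain ⟨c, hc⟩ := exists_forall_ae_eq_arc_of_circleEnergy_le hKm hKe hK hf hfa <| by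
      filter_upwards [hmin, ae_lt_top' hm hfin] with q hq hq_fin using ⟨hq_fin.ne, hq.ge⟩
    exact ⟨-c, by simpa only [← sub_eq_add_neg] using hc⟩
  · rintro ⟨c, hc⟩
    refine lintegral_congr_ae ?_
    filter_upwards [Measure.quasiMeasurePreserving_fst.ae hc,
      Measure.quasiMeasurePreserving_snd.ae hc] with q hfst hsnd
    exact ((hf q.1).circleEnergy_congr_comp_add_const (hf q.2) (isPeriodicDensity_arc _)
      (isPeriodicDensity_arc _) (hKm q) (hKe q) (hK q).antitoneOn hfst hsnd).symm

end EnergyMinimizers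

section ThetaKernel

open Filter Finset HurwitzZeta
open scoped Topology

variable {q a b t z w : ℝ}

/-! ### Monotonicity of the theta function via a finite Jacobi triple product -/

/-- A factor `|1 + Q e^{iz}|² = 1 + 2 Q cos z + Q²` of the Jacobi triple product. -/
noncomputable def jacobiFactor (Q z : ℝ) : ℝ := 1 + 2 * Q * cos z + Q ^ 2

/-- The finite Jacobi product `∏_{j < N} |1 + q^{2j+1} e^{iz}|²`. -/
noncomputable def jacobiProd (q : ℝ) (N : ℕ) (z : ℝ) : ℝ :=
  ∏ j ∈ range N, jacobiFactor (q ^ (2 * j + 1)) z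

/-- The Fourier coefficients of `jacobiProd q N`, generated by multiplying out one factor at a
time. -/
noncomputable def jacobiCoeff (q : ℝ) : ℕ → ℤ → ℝ
  | 0 => fun k ↦ if k = 0 then 1 else 0
  | N + 1 => fun k ↦ (1 + (q ^ (2 * N + 1)) ^ 2) * jacobiCoeff q N k +
      q ^ (2 * N + 1) * (jacobiCoeff q N (k - 1) + jacobiCoeff q N (k + 1))

theorem jacobiFactor_pos (hq : 0 < q) (hq1 : q < 1) (z : ℝ) : 0 < jacobiFactor q z := by
  have hcos : 0 ≤ 2 * q * (1 + cos z) := by linarith [mul_nonneg hq.le (neg_le_iff_add_nonneg'.1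
    (neg_one_le_cos z))]
  have hsq : 0 < (1 - q) ^ 2 := pow_pos (sub_pos.2 hq1) 2
  rw [jacobiFactor]
  linarith

theorem jacobiProd_nonneg (hq : 0 < q) (hq1 : q < 1) (N : ℕ) (z : ℝ) : 0 ≤ jacobiProd q N z :=
  prod_nonneg fun j _ ↦
    (jacobiFactor_pos (pow_pos hq _) (pow_lt_one₀ hq.le hq1 (by lia)) z).le

theorem jacobiProd_succ (q : ℝ) (N : ℕ) (z : ℝ) :
    jacobiProd q (N + 1) z = jacobiProd q N z * jacobiFactor (q ^ (2 * N + 1)) z :=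
  prod_range_succ _ _

/- Every factor is decreasing in `z`, so dropping all factors but the first only weakens the
decay of the product from `z` to `w`. -/
theorem jacobiProd_mul_jacobiFactor_le (hq : 0 < q) (hq1 : q < 1) (hcos : cos w ≤ cos z) (N : ℕ) :
    jacobiProd q (N + 1) w * jacobiFactor q z ≤ jacobiProd q (N + 1) z * jacobiFactor q w := by
  induction N with
  | zero => simp [jacobiProd, mul_comm]
  | succ N ih =>
    rw [jacobiProd_succ, jacobiProd_succ q (N + 1)]
    set Q := q ^ (2 * (N + 1) + 1)
    have hQ : 0 < Q := pow_pos hq _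
    have hQ1 : Q < 1 := pow_lt_one₀ hq.le hq1 (by lia)
    have hanti : jacobiFactor Q w ≤ jacobiFactor Q z := by
      rw [jacobiFactor, jacobiFactor]
      gcongr
    calc jacobiProd q (N + 1) w * jacobiFactor Q w * jacobiFactor q z
        = jacobiProd q (N + 1) w * jacobiFactor q z * jacobiFactor Q w := by ring
      _ ≤ jacobiProd q (N + 1) z * jacobiFactor q w * jacobiFactor Q z :=
        mul_le_mul ih hanti (jacobiFactor_pos hQ hQ1 w).le
          (mul_nonneg (jacobiProd_nonneg hq hq1 _ z) (jacobiFactor_pos hq hq1 w).le)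
      _ = jacobiProd q (N + 1) z * jacobiFactor Q z * jacobiFactor q w := by ring

theorem jacobiCoeff_nonneg (hq : 0 < q) (N : ℕ) : ∀ k, 0 ≤ jacobiCoeff q N k := by
  induction N with
  | zero =>
    intro k
    rw [jacobiCoeff]
    positivity
  | succ N ih =>
    intro k
    have := ih k
    have := ih (k - 1)
    have := ih (k + 1)
    rw [jacobiCoeff]
    positivity

theorem jacobiCoeff_zero_pos (hq : 0 < q) (N : ℕ) : 0 < jacobiCoeff q N 0 := by
  induction N with
  | zero => simp [jacobiCoeff]
  | succ N ih =>
    have := jacobiCoeff_nonneg hq N (0 - 1)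
    have := jacobiCoeff_nonneg hq N (0 + 1)
    rw [jacobiCoeff]
    positivity

theorem jacobiCoeff_neg (q : ℝ) (N : ℕ) : ∀ k, jacobiCoeff q N (-k) = jacobiCoeff q N k := by
  induction N with
  | zero => simp [jacobiCoeff]
  | succ N ih =>
    intro k
    simp only [jacobiCoeff]
    rw [show -k - 1 = -(k + 1) by ring, show -k + 1 = -(k - 1) by ring, ih, ih, ih]
    ring

theorem jacobiCoeff_natAbs (q : ℝ) (N : ℕ) (k : ℤ) :
    jacobiCoeff q N k.natAbs = jacobiCoeff q N k := by
  rcases Int.natAbs_eq k with h | h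
  · rw [← h]
  · conv_rhs => rw [h, jacobiCoeff_neg]

/- Comparing coefficients in the functional equation of the product under the complex shift
`e^{iz} ↦ q² e^{iz}` gives this two-term recursion. -/
theorem jacobiCoeff_add_one_mul (hq : 0 < q) (N : ℕ) : ∀ k : ℤ,
    jacobiCoeff q N (k + 1) * (1 - q ^ (2 * N + 1) * q ^ (2 * k + 1)) =
      jacobiCoeff q N k * (q ^ (2 * k + 1) - q ^ (2 * N + 1)) := by
  have hq0 := hq.ne'
  induction N with
  | zero =>
    intro k
    simp only [jacobiCoeff]
    rcases eq_or_ne k 0 with rfl | h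
    · simp
    rcases eq_or_ne k (-1) with rfl | h'
    · simp [hq0]
    · simp [h, show k + 1 ≠ 0 by lia]
  | succ N ih =>
    intro k
    have hk := ih k
    have hk_succ := ih (k + 1)
    have hk_pred := ih (k - 1)
    have hpow_succ : q ^ (2 * (k + 1) + 1) = q ^ (2 * k + 1) * q ^ 2 := by
      rw [show 2 * (k + 1) + 1 = 2 * k + 1 + 2 by ring, zpow_add₀ hq0]
      norm_cast
    have hpow_pred : q ^ (2 * (k - 1) + 1) * q ^ 2 = q ^ (2 * k + 1) := by
      rw [show 2 * k + 1 = 2 * (k - 1) + 1 + 2 by ring, zpow_add₀ hq0 (2 * (k - 1) + 1) 2]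
      norm_cast
    have hpow_N : q ^ (2 * (N + 1) + 1) = q ^ (2 * N + 1) * q ^ 2 := by ring
    rw [hpow_succ] at hk_succ
    rw [sub_add_cancel] at hk_pred
    simp only [jacobiCoeff, add_sub_cancel_right, hpow_N]
    linear_combination (1 + (q ^ (2 * N + 1)) ^ 2 * q ^ 2) * hk + q ^ (2 * N + 1) * hk_succ
      + q ^ (2 * N + 1) * q ^ 2 * hk_pred
      + q ^ (2 * N + 1) * (q ^ (2 * N + 1) * jacobiCoeff q N k + jacobiCoeff q N (k - 1))
        * hpow_pred

theorem jacobiCoeff_nat_add_one (hq : 0 < q) (hq1 : q < 1) (N k : ℕ) :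
    jacobiCoeff q N (k + 1) = jacobiCoeff q N k *
      ((q ^ (2 * k + 1) - q ^ (2 * N + 1)) / (1 - q ^ (2 * N + 1) * q ^ (2 * k + 1))) := by
  have hlt : q ^ (2 * N + 1) * q ^ (2 * k + 1) < 1 := by
    rw [← pow_add]
    exact pow_lt_one₀ hq.le hq1 (by lia)
  rw [← mul_div_assoc, eq_div_iff (sub_pos.2 hlt).ne']
  exact_mod_cast jacobiCoeff_add_one_mul hq N k

theorem jacobiCoeff_nat_le (hq : 0 < q) (hq1 : q < 1) (N k : ℕ) :
    jacobiCoeff q N k ≤ q ^ (k ^ 2) * jacobiCoeff q N 0 := by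
  induction k with
  | zero => simp
  | succ k ih =>
    set x := q ^ (2 * k + 1) with hx
    set Q := q ^ (2 * N + 1)
    have hx0 : 0 < x := pow_pos hq _
    have hx1 : x < 1 := pow_lt_one₀ hq.le hq1 (by lia)
    have hQ0 : 0 < Q := pow_pos hq _
    have hQx : 0 < 1 - Q * x :=
      sub_pos.2 (mul_lt_one_of_nonneg_of_lt_one_right (pow_le_one₀ hq.le hq1.le) hx0.le hx1)
    have hratio : (x - Q) / (1 - Q * x) ≤ x := by
      rw [div_le_iff₀ hQx]
      linarith [mul_nonneg hQ0.le (by nlinarith : 0 ≤ 1 - x * x)]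
    calc jacobiCoeff q N (k + 1 : ℕ) = jacobiCoeff q N k * ((x - Q) / (1 - Q * x)) := by
          exact_mod_cast jacobiCoeff_nat_add_one hq hq1 N k
      _ ≤ jacobiCoeff q N k * x := mul_le_mul_of_nonneg_left hratio (jacobiCoeff_nonneg hq N k)
      _ ≤ q ^ (k ^ 2) * jacobiCoeff q N 0 * x := mul_le_mul_of_nonneg_right ih hx0.le
      _ = q ^ ((k + 1) ^ 2) * jacobiCoeff q N 0 := by rw [hx]; ring

theorem tendsto_jacobiCoeff_nat_div (hq : 0 < q) (hq1 : q < 1) (k : ℕ) :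
    Tendsto (fun N ↦ jacobiCoeff q N k / jacobiCoeff q N 0) atTop (𝓝 (q ^ (k ^ 2))) := by
  induction k with
  | zero => exact tendsto_const_nhds.congr fun N ↦ by simp [(jacobiCoeff_zero_pos hq N).ne']
  | succ k ih =>
    have hQ : Tendsto (fun N : ℕ ↦ q ^ (2 * N + 1)) atTop (𝓝 0) :=
      (tendsto_pow_atTop_nhds_zero_of_lt_one hq.le hq1).comp
        (tendsto_atTop_mono (fun N ↦ (by lia : N ≤ 2 * N + 1)) tendsto_id)
    have hratio : Tendsto (fun N : ℕ ↦
        (q ^ (2 * k + 1) - q ^ (2 * N + 1)) / (1 - q ^ (2 * N + 1) * q ^ (2 * k + 1)))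
        atTop (𝓝 ((q ^ (2 * k + 1) - 0) / (1 - 0 * q ^ (2 * k + 1)))) :=
      (tendsto_const_nhds.sub hQ).div (tendsto_const_nhds.sub (hQ.mul_const _)) (by simp)
    convert ih.mul hratio using 2 with N
    · rw [Nat.cast_succ, jacobiCoeff_nat_add_one hq hq1, mul_div_right_comm]
    · rw [zero_mul, sub_zero, sub_zero, div_one, ← pow_add]
      ring

theorem finite_support_jacobiCoeff (q : ℝ) (N : ℕ) : (jacobiCoeff q N).support.Finite := by
  induction N with
  | zero =>
    refine (Set.finite_singleton (0 : ℤ)).subset fun k hk ↦ ?_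
    simpa [jacobiCoeff] using hk
  | succ N ih =>
    refine (((ih.preimage (sub_left_injective (b := (1 : ℤ))).injOn).union
      (ih.preimage (add_left_injective (1 : ℤ)).injOn)).union ih).subset fun k hk ↦ ?_
    contrapose! hk
    simp only [Set.mem_union, Set.mem_preimage, Function.mem_support, not_or, not_not] at hk
    simp [jacobiCoeff, hk]

theorem hasSum_jacobiCoeff_mul_cos (q : ℝ) (N : ℕ) (z : ℝ) :
    HasSum (fun k : ℤ ↦ jacobiCoeff q N k * cos (k * z)) (jacobiProd q N z) := by
  induction N with
  | zero =>
    convert hasSum_ite_eq (0 : ℤ) (1 : ℝ) using 2 with k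
    · by_cases h : k = 0 <;> simp [jacobiCoeff, h]
    · simp [jacobiProd]
  | succ N ih =>
    have hsum (e : ℤ → ℝ) : Summable fun k : ℤ ↦ jacobiCoeff q N k * e k :=
      summable_of_hasFiniteSupport ((finite_support_jacobiCoeff q N).subset
        (Function.support_mul_subset_left _ _))
    have hup := hsum fun k ↦ cos ((k + 1 : ℤ) * z)
    have hdown := hsum fun k ↦ cos ((k - 1 : ℤ) * z)
    have hneighbours : (∑' k : ℤ, jacobiCoeff q N k * cos ((k + 1 : ℤ) * z)) +
        ∑' k : ℤ, jacobiCoeff q N k * cos ((k - 1 : ℤ) * z) = 2 * cos z * jacobiProd q N z := by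
      rw [← hup.tsum_add hdown, ← ih.tsum_eq, ← tsum_mul_left]
      refine tsum_congr fun k ↦ ?_
      push_cast
      rw [add_mul, sub_mul, one_mul, cos_add, cos_sub]
      ring
    have hshift := ((Equiv.subRight (1 : ℤ)).hasSum_iff.2 hup.hasSum).add
      ((Equiv.addRight (1 : ℤ)).hasSum_iff.2 hdown.hasSum)
    have hprod : jacobiProd q (N + 1) z = (1 + (q ^ (2 * N + 1)) ^ 2) * jacobiProd q N z +
        q ^ (2 * N + 1) * (2 * cos z * jacobiProd q N z) := by
      rw [jacobiProd_succ, jacobiFactor]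
      ring
    rw [hprod, ← hneighbours]
    refine ((ih.mul_left _).add (hshift.mul_left _)).congr_fun fun k ↦ ?_
    simp only [jacobiCoeff, Function.comp_apply, Equiv.subRight_apply, Equiv.coe_addRight,
      sub_add_cancel, add_sub_cancel_right]
    ring

theorem summable_pow_natAbs_sq (hq : 0 < q) (hq1 : q < 1) :
    Summable fun k : ℤ ↦ q ^ (k.natAbs ^ 2) := by
  have hnat : Summable fun n : ℕ ↦ q ^ (n ^ 2) :=
    (summable_geometric_of_lt_one hq.le hq1).of_nonneg_of_le (fun n ↦ by positivity)
      fun n ↦ pow_le_pow_of_le_one hq.le hq1.le (Nat.le_self_pow two_ne_zero n)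
  exact .of_nat_of_neg (by simpa using hnat) (by simpa using hnat)

theorem hasSum_exp_mul_cos_cosKernel (a : ℝ) (ht : 0 < t) :
    HasSum (fun k : ℤ ↦ exp (-π * t) ^ (k.natAbs ^ 2) * cos (k * (2 * π * a)))
      (cosKernel a t) := by
  convert Complex.hasSum_re (hasSum_int_cosKernel a ht) using 2 with k
  · rw [Complex.re_mul_ofReal, show (2 * π * Complex.I * a * k : ℂ) =
      ((k * (2 * π * a) : ℝ) : ℂ) * Complex.I by push_cast; ring, Complex.exp_ofReal_mul_I_re,
      ← exp_nat_mul, Nat.cast_pow, Nat.cast_natAbs, Int.cast_abs, sq_abs, mul_comm (cos _)]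
    ring_nf
  · rw [Complex.ofReal_re]

theorem tendsto_jacobiProd_div (a : ℝ) (ht : 0 < t) :
    Tendsto (fun N ↦ jacobiProd (exp (-π * t)) N (2 * π * a) / jacobiCoeff (exp (-π * t)) N 0)
      atTop (𝓝 (cosKernel a t)) := by
  set q := exp (-π * t)
  have hq : 0 < q := exp_pos _
  have hq1 : q < 1 := exp_lt_one_iff.2 (mul_neg_of_neg_of_pos (neg_neg_of_pos pi_pos) ht)
  rw [← (hasSum_exp_mul_cos_cosKernel a ht).tsum_eq]
  refine (tendsto_tsum_of_dominated_convergence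
    (f := fun N (k : ℤ) ↦ jacobiCoeff q N k / jacobiCoeff q N 0 * cos (k * (2 * π * a)))
    (summable_pow_natAbs_sq hq hq1) (fun k ↦ ?_) (.of_forall fun N k ↦ ?_)).congr fun N ↦ ?_
  · simp only [← jacobiCoeff_natAbs q _ k]
    exact (tendsto_jacobiCoeff_nat_div hq hq1 _).mul_const _
  · have hpos := jacobiCoeff_zero_pos hq N
    rw [norm_mul, norm_of_nonneg (div_nonneg (jacobiCoeff_nonneg hq N k) hpos.le), norm_eq_abs]
    refine (mul_le_of_le_one_right (div_nonneg (jacobiCoeff_nonneg hq N k) hpos.le)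
      (abs_cos_le_one _)).trans ((div_le_iff₀ hpos).2 ?_)
    rw [← jacobiCoeff_natAbs]
    exact jacobiCoeff_nat_le hq hq1 N _
  · rw [← (hasSum_jacobiCoeff_mul_cos q N _).tsum_eq, ← tsum_div_const]
    simp only [mul_div_right_comm]

theorem evenKernel_pos (a : ℝ) (ht : 0 < t) : 0 < evenKernel a t := by
  rw [← (hasSum_int_evenKernel a ht).tsum_eq]
  exact (hasSum_int_evenKernel a ht).summable.tsum_pos (fun _ ↦ (exp_pos _).le) 0 (exp_pos _)

theorem cosKernel_eq_rpow_mul_evenKernel (a : ℝ) (ht : 0 < t) :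
    cosKernel a t = (1 / t) ^ (1 / 2 : ℝ) * evenKernel a (1 / t) := by
  have hpos : 0 < (1 / t) ^ (1 / 2 : ℝ) := rpow_pos_of_pos (one_div_pos.2 ht) _
  rw [evenKernel_functional_equation, one_div_one_div, ← mul_assoc, mul_one_div_cancel hpos.ne',
    one_mul]

theorem strictAntiOn_cosKernel (ht : 0 < t) :
    StrictAntiOn (fun a : ℝ ↦ cosKernel a t) (Set.Icc 0 (1 / 2)) := by
  intro a ha b hb hab
  set q := exp (-π * t)
  have hq : 0 < q := exp_pos _
  have hq1 : q < 1 := exp_lt_one_iff.2 (mul_neg_of_neg_of_pos (neg_neg_of_pos pi_pos) ht)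
  have hcos : cos (2 * π * b) < cos (2 * π * a) :=
    cos_lt_cos_of_nonneg_of_le_pi (by have := ha.1; positivity) (by nlinarith [hb.2, pi_pos])
      (by gcongr)
  have hle : cosKernel b t * jacobiFactor q (2 * π * a) ≤
      cosKernel a t * jacobiFactor q (2 * π * b) := by
    refine le_of_tendsto_of_tendsto'
      (((tendsto_jacobiProd_div b ht).comp (tendsto_add_atTop_nat 1)).mul_const _)
      (((tendsto_jacobiProd_div a ht).comp (tendsto_add_atTop_nat 1)).mul_const _) fun N ↦ ?_
    simp only [Function.comp_apply, div_mul_eq_mul_div]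
    exact div_le_div_of_nonneg_right (jacobiProd_mul_jacobiFactor_le hq hq1 hcos.le N)
      (jacobiCoeff_zero_pos hq _).le
  have hpos : 0 < cosKernel b t := by
    rw [cosKernel_eq_rpow_mul_evenKernel b ht]
    exact mul_pos (rpow_pos_of_pos (one_div_pos.2 ht) _) (evenKernel_pos b (one_div_pos.2 ht))
  have hfactor : jacobiFactor q (2 * π * b) < jacobiFactor q (2 * π * a) := by
    rw [jacobiFactor, jacobiFactor]
    gcongr
  exact lt_of_mul_lt_mul_right ((mul_lt_mul_of_pos_left hfactor hpos).trans_le hle)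
    (jacobiFactor_pos hq hq1 _).le

theorem strictAntiOn_evenKernel (ht : 0 < t) :
    StrictAntiOn (fun a : ℝ ↦ evenKernel a t) (Set.Icc 0 (1 / 2)) := fun a ha b hb hab ↦ by
  simp only [evenKernel_functional_equation]
  exact mul_lt_mul_of_pos_left (strictAntiOn_cosKernel (one_div_pos.2 ht) ha hb hab)
    (one_div_pos.2 (rpow_pos_of_pos ht _))

end ThetaKernel

section PeriodicKernel

open HurwitzZeta

variable {p x z l : ℝ}

/-! ### The periodized Gagliardo kernel -/

/-- The kernel obtained by summing `(z² + r²)^{-p/2}` over the translates of `z` by `2πℤ`; for a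
`2π`-periodic function it replaces the Gagliardo kernel when the first variable is reduced to one
period, `r` being the distance in the remaining variables. -/
noncomputable def periodicKernel (p r z : ℝ) : ℝ≥0∞ :=
  ∑' k : ℤ, ENNReal.ofReal (1 / √((z + 2 * π * k) ^ 2 + r ^ 2) ^ p)

theorem measurable_uncurry_periodicKernel {X : Type*} [MeasurableSpace X] (p : ℝ) {r : X → ℝ}
    (hr : Measurable r) : Measurable (Function.uncurry fun x ↦ periodicKernel p (r x)) :=
  Measurable.tsum fun k ↦ by fun_prop

theorem even_periodicKernel (p r : ℝ) : (periodicKernel p r).Even := fun z ↦ by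
  rw [periodicKernel, periodicKernel, ← (Equiv.neg ℤ).tsum_eq]
  refine tsum_congr fun k ↦ ?_
  rw [Equiv.neg_apply, Int.cast_neg, mul_neg, ← neg_add, neg_sq]

theorem add_two_pi_mul_int_ne_zero (hz : z ∈ Set.Ioo 0 π) (k : ℤ) : z + 2 * π * k ≠ 0 := by
  intro h
  have hk : (-1 : ℝ) < k ∧ (k : ℝ) < 0 :=
    ⟨by nlinarith [hz.1, hz.2], by nlinarith [hz.1, hz.2]⟩
  have : -1 < k ∧ k < 0 := by exact_mod_cast hk
  lia

theorem periodicKernel_ne_top (hp : 1 < p) (r : ℝ) (hz : z ∈ Set.Ioo 0 π) :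
    periodicKernel p r z ≠ ⊤ := by
  have hsum : Summable fun k : ℤ ↦ 1 / (2 * π) ^ p * (1 / |(k : ℝ) + z / (2 * π)| ^ p) :=
    ((summable_one_div_int_add_rpow _ _).2 hp).mul_left _
  refine (hsum.of_nonneg_of_le (fun k ↦ by positivity) fun k ↦ ?_).tsum_ofReal_ne_top
  have habs : |z + 2 * π * k| = 2 * π * |(k : ℝ) + z / (2 * π)| := by
    rw [← abs_of_pos two_pi_pos, ← abs_mul, abs_of_pos two_pi_pos]
    congr 1
    field
  have hpos : 0 < |z + 2 * π * k| := abs_pos.2 (add_two_pi_mul_int_ne_zero hz k)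
  rw [one_div_mul_one_div, ← mul_rpow two_pi_pos.le (abs_nonneg _), ← habs]
  have hle : |z + 2 * π * k| ≤ √((z + 2 * π * k) ^ 2 + r ^ 2) :=
    abs_le_sqrt (le_add_of_nonneg_right (sq_nonneg r))
  gcongr

theorem ofReal_one_div_sqrt_rpow (hp : 0 < p) (hx : 0 < x) :
    ENNReal.ofReal (1 / √x ^ p) = ENNReal.ofReal (1 / Gamma (p / 2)) *
      ∫⁻ l in Set.Ioi 0, ENNReal.ofReal (l ^ (p / 2 - 1) * exp (-(x * l))) := by
  have := Gamma_pos_of_pos (half_pos hp)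
  have hint := integral_rpow_mul_exp_neg_mul_Ioi (half_pos hp) hx
  rw [← ofReal_integral_eq_lintegral_ofReal (.of_integral_ne_zero (by rw [hint]; positivity)), hint,
    ← ENNReal.ofReal_mul (by positivity)]
  · congr 1
    rw [sqrt_eq_rpow, ← rpow_mul hx.le, one_div x, inv_rpow hx.le]
    field_simp
  · filter_upwards [self_mem_ae_restrict measurableSet_Ioi] with l (hl : 0 < l)
    exact mul_nonneg (rpow_nonneg hl.le _) (exp_nonneg _)

theorem hasSum_exp_neg_mul_add_two_pi_sq (hl : 0 < l) (z : ℝ) :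
    HasSum (fun k : ℤ ↦ exp (-(l * (z + 2 * π * k) ^ 2)))
      (evenKernel (z / (2 * π) : ℝ) (4 * π * l)) := by
  refine (hasSum_int_evenKernel (z / (2 * π)) (by positivity)).congr_fun fun k ↦ ?_
  congr 1
  field

theorem periodicKernel_eq_lintegral_evenKernel (hp : 0 < p) (r : ℝ) (hz : z ∈ Set.Ioo 0 π) :
    periodicKernel p r z = ENNReal.ofReal (1 / Gamma (p / 2)) *
      ∫⁻ l in Set.Ioi 0, ENNReal.ofReal (l ^ (p / 2 - 1) * exp (-(r ^ 2 * l)) *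
        evenKernel (z / (2 * π) : ℝ) (4 * π * l)) := by
  have hpos (k : ℤ) : 0 < (z + 2 * π * k) ^ 2 + r ^ 2 := by
    have := add_two_pi_mul_int_ne_zero hz k
    positivity
  simp only [periodicKernel, ofReal_one_div_sqrt_rpow hp (hpos _)]
  rw [ENNReal.tsum_mul_left, ← lintegral_tsum fun k ↦ by fun_prop]
  congr 1
  refine setLIntegral_congr_fun measurableSet_Ioi fun l (hl : 0 < l) ↦ ?_
  have hsum := (hasSum_exp_neg_mul_add_two_pi_sq hl z).mul_left
    (l ^ (p / 2 - 1) * exp (-(r ^ 2 * l)))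
  rw [← hsum.tsum_eq, ENNReal.ofReal_tsum_of_nonneg (fun k ↦ by positivity) hsum.summable]
  refine tsum_congr fun k ↦ ?_
  rw [mul_assoc (l ^ _), ← exp_add, add_comm (_ ^ 2), add_mul, neg_add, mul_comm l]

theorem strictAntiOn_periodicKernel (hp : 1 < p) (r : ℝ) :
    StrictAntiOn (periodicKernel p r) (Set.Ioo 0 π) := by
  intro z hz w hw hzw
  have hp0 : 0 < p := zero_lt_one.trans hp
  have hC : ENNReal.ofReal (1 / Gamma (p / 2)) ≠ 0 :=
    ENNReal.ofReal_ne_zero_iff.2 (one_div_pos.2 (Gamma_pos_of_pos (half_pos hp0)))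
  have hfinite := periodicKernel_ne_top hp r hw
  rw [periodicKernel_eq_lintegral_evenKernel hp0 r hw] at hfinite ⊢
  rw [periodicKernel_eq_lintegral_evenKernel hp0 r hz,
    ENNReal.mul_lt_mul_iff_right hC ENNReal.ofReal_ne_top]
  have hmem {y : ℝ} (hy : y ∈ Set.Ioo 0 π) : y / (2 * π) ∈ Set.Icc (0 : ℝ) (1 / 2) :=
    ⟨div_nonneg hy.1.le two_pi_pos.le, by
      rw [div_le_div_iff₀ two_pi_pos two_pos]; linarith [hy.2]⟩
  refine lintegral_strict_mono (by simp) ?_ (fun h ↦ hfinite (by rw [h, ENNReal.mul_top hC])) ?_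
  · have hcont : ContinuousOn (fun l : ℝ ↦ evenKernel (z / (2 * π) : ℝ) (4 * π * l)) (Set.Ioi 0) :=
      (continuousOn_evenKernel _).comp (by fun_prop) fun l (hl : 0 < l) ↦
        (by positivity : 0 < 4 * π * l)
    exact (AEMeasurable.mul (by fun_prop) (hcont.aemeasurable measurableSet_Ioi)).ennreal_ofReal
  · filter_upwards [self_mem_ae_restrict measurableSet_Ioi] with l (hl : 0 < l)
    have ht : 0 < 4 * π * l := by positivity
    have hpos := evenKernel_pos (z / (2 * π)) ht
    rw [ENNReal.ofReal_lt_ofReal_iff (by positivity)]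
    exact mul_lt_mul_of_pos_left
      (strictAntiOn_evenKernel ht (hmem hz) (hmem hw) (by gcongr)) (by positivity)

end PeriodicKernel

/-! ### Slicing the Gagliardo seminorm -/

section Slicing

theorem lintegral_eq_lintegral_Ioc_tsum_add_zsmul {T : ℝ} (hT : 0 < T) (c : ℝ) {F : ℝ → ℝ≥0∞}
    (hF : Measurable F) :
    ∫⁻ z, F z = ∫⁻ z in Set.Ioc c (c + T), ∑' k : ℤ, F (z + k • T) := by
  have htranslate (k : ℤ) : ∫⁻ z in Set.Ioc (c + k • T) (c + (k + 1) • T), F z =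
      ∫⁻ z in Set.Ioc c (c + T), F (z + k • T) := by
    rw [← (measurePreserving_add_right volume (k • T)).setLIntegral_comp_preimage
      measurableSet_Ioc hF, Set.preimage_add_const_Ioc]
    congr 3 <;> ring
  rw [lintegral_tsum fun k ↦ by fun_prop, ← setLIntegral_univ, ← iUnion_Ioc_add_zsmul hT c,
    lintegral_iUnion (fun _ ↦ measurableSet_Ioc) (Set.pairwise_disjoint_Ioc_add_zsmul c T)]
  exact tsum_congr htranslate

theorem lintegral_ofReal_div_eq_lintegral_periodicKernel {h : ℝ → ℝ} (hm : Measurable h)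
    (hh : Function.Periodic h (2 * π)) (hnonneg : ∀ y, 0 ≤ h y) (p r x : ℝ) :
    ∫⁻ y, ENNReal.ofReal (h y / √((x - y) ^ 2 + r ^ 2) ^ p) =
      ∫⁻ z in Set.Ioc (-π) π, ENNReal.ofReal (h (x + z)) * periodicKernel p r z := by
  have hF : Measurable fun z ↦
      ENNReal.ofReal (h (x + z) / √((x - (x + z)) ^ 2 + r ^ 2) ^ p) := by fun_prop
  rw [← lintegral_add_left_eq_self _ x,
    lintegral_eq_lintegral_Ioc_tsum_add_zsmul two_pi_pos (-π) hF, show -π + 2 * π = π by ring]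
  refine lintegral_congr fun z ↦ ?_
  rw [periodicKernel, ← ENNReal.tsum_mul_left]
  refine tsum_congr fun k ↦ ?_
  rw [← ENNReal.ofReal_mul (hnonneg _), mul_one_div, ← add_assoc, hh.zsmul k]
  congr 4
  simp only [zsmul_eq_mul]
  ring

theorem IsPeriodicDensity.lintegral_mismatch_div_eq_circleEnergy {f g : ℝ → ℝ}
    (hf : IsPeriodicDensity (2 * π) f) (hg : IsPeriodicDensity (2 * π) g) (p r : ℝ) :
    ∫⁻ x in Set.Ioc (-π) π, ∫⁻ y,
        ENNReal.ofReal (mismatch (f x) (g y) / √((x - y) ^ 2 + r ^ 2) ^ p) =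
      circleEnergy (periodicKernel p r) f g := by
  have hgm := hg.measurable
  have hfm := hf.measurable
  have hkernel : Measurable (periodicKernel p r) :=
    (measurable_uncurry_periodicKernel p measurable_id).of_uncurry_left
  calc ∫⁻ x in Set.Ioc (-π) π, ∫⁻ y,
        ENNReal.ofReal (mismatch (f x) (g y) / √((x - y) ^ 2 + r ^ 2) ^ p)
      = ∫⁻ x in Set.Ioc (-π) π, ∫⁻ z in Set.Ioc (-π) π,
          ENNReal.ofReal (mismatch (f x) (g (x + z))) * periodicKernel p r z :=
        lintegral_congr fun x ↦ lintegral_ofReal_div_eq_lintegral_periodicKernel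
          (h := fun y ↦ mismatch (f x) (g y)) (by unfold mismatch; fun_prop)
          (hg.periodic.comp (mismatch (f x))) (fun y ↦ (hf.mismatch_mem_Icc hg x y).1) p r x
    _ = ∫⁻ z in Set.Ioc (-π) π, ∫⁻ x in Set.Ioc (-π) π,
          ENNReal.ofReal (mismatch (f x) (g (x + z))) * periodicKernel p r z :=
        lintegral_lintegral_swap <| Measurable.aemeasurable <|
          Measurable.mul (by unfold mismatch; fun_prop) (by fun_prop)
    _ = circleEnergy (periodicKernel p r) f g :=
        lintegral_congr fun z ↦ lintegral_mul_const _ (by unfold mismatch; fun_prop)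

variable {X Y Z : Type*} [MeasurableSpace X] [MeasurableSpace Y] [MeasurableSpace Z]

theorem lintegral_prod_lintegral_prod {μ : Measure X} {ν : Measure Y} {μ' : Measure Z}
    [SFinite μ] [SFinite ν] [SFinite μ'] {F : (X × Y) × (Z × Y) → ℝ≥0∞} (hF : Measurable F) :
    ∫⁻ x, ∫⁻ y, F (x, y) ∂μ'.prod ν ∂μ.prod ν =
      ∫⁻ q, ∫⁻ x, ∫⁻ y, F ((x, q.1), (y, q.2)) ∂μ' ∂μ ∂ν.prod ν := by
  have hmeas : Measurable fun w : (Y × Y) × X ↦ ∫⁻ y, F ((w.2, w.1.1), (y, w.1.2)) ∂μ' :=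
    Measurable.lintegral_prod_right'
      (f := fun v : ((Y × Y) × X) × Z ↦ F ((v.1.2, v.1.1.1), (v.2, v.1.1.2))) (by fun_prop)
  rw [lintegral_prod_symm _ hF.lintegral_prod_right'.aemeasurable,
    lintegral_prod _ hmeas.lintegral_prod_right'.aemeasurable]
  refine lintegral_congr fun x' ↦ ?_
  rw [← lintegral_lintegral_swap (f := fun x y' ↦ ∫⁻ y, F ((x, x'), (y, y')) ∂μ')
    (hmeas.comp (by fun_prop : Measurable fun w : X × Y ↦ ((x', w.2), w.1))).aemeasurable]
  exact lintegral_congr fun x ↦ lintegral_prod_symm _ (by fun_prop)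

theorem measurable_circleEnergy {K : Y × Y → ℝ → ℝ≥0∞} (hK : Measurable (Function.uncurry K))
    {u : ℝ × Y → ℝ} (hu : Measurable u) :
    Measurable fun q ↦ circleEnergy (K q) (fun t ↦ u (t, q.1)) fun t ↦ u (t, q.2) := by
  have hmismatch : Measurable fun w : ((Y × Y) × ℝ) × ℝ ↦
      ENNReal.ofReal (mismatch (u (w.2, w.1.1.1)) (u (w.2 + w.1.2, w.1.1.2))) := by
    unfold mismatch
    fun_prop
  exact (hmismatch.lintegral_prod_right'.mul hK).lintegral_prod_right'

variable {m : ℕ} {s p : ℝ} {u : ℝ × EuclideanSpace ℝ (Fin m) → ℝ}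

theorem gagP_eq_lintegral_circleEnergy (hp : 0 < p) (hu : Measurable u)
    (hslice : ∀ x', IsPeriodicDensity (2 * π) fun t ↦ u (t, x')) (hu01 : ∀ x, u x = 0 ∨ u x = 1) :
    gagP m s p u = ∫⁻ q, circleEnergy (periodicKernel (m + 1 + s * p) ‖q.1 - q.2‖)
      (fun t ↦ u (t, q.1)) (fun t ↦ u (t, q.2)) ∂volume.prod volume := by
  have hpow (x y) : |u x - u y| ^ p = mismatch (u x) (u y) := by
    rcases hu01 x with hx | hx <;> rcases hu01 y with hy | hy <;>
      simp [hx, hy, mismatch, hp.ne']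
  have hstrip : volume.restrict {x : ℝ × EuclideanSpace ℝ (Fin m) | x.1 ∈ Set.Ioo (-π) π} =
      (volume.restrict (Set.Ioc (-π) π)).prod volume := by
    rw [← restrict_Ioo_eq_restrict_Ioc, Measure.restrict_prod_eq_prod_univ, Set.prod_univ,
      Measure.volume_eq_prod]
    rfl
  simp only [gagP, hpow]
  rw [hstrip, Measure.volume_eq_prod]
  rw [lintegral_prod_lintegral_prod
    (F := fun w ↦ ENNReal.ofReal (mismatch (u w.1) (u w.2) /
      √((w.1.1 - w.2.1) ^ 2 + ‖w.1.2 - w.2.2‖ ^ 2) ^ (m + 1 + s * p)))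
    (by unfold mismatch; fun_prop)]
  refine lintegral_congr fun q ↦ ?_
  rw [← (hslice q.1).lintegral_mismatch_div_eq_circleEnergy (hslice q.2)]

end Slicing

/-! ### Rearranged slices of a set -/

section Slices

variable {m : ℕ} {E : Set (ℝ × EuclideanSpace ℝ (Fin m))}

/-- Half the length of the slice `{t ∈ (-π, π) | (t, x') ∈ E}`, that is, the half-length of the arc
into which periodic rearrangement turns this slice. -/
noncomputable def halfSliceLength (E : Set (ℝ × EuclideanSpace ℝ (Fin m)))
    (x' : EuclideanSpace ℝ (Fin m)) : ℝ :=
  (volume {t | t ∈ Set.Ioo (-π) π ∧ (t, x') ∈ E}).toReal / 2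

theorem measurable_halfSliceLength (hE : MeasurableSet E) : Measurable (halfSliceLength E) :=
  (measurable_measure_prodMk_right
    ((measurable_fst measurableSet_Ioo).inter hE)).ennreal_toReal.div_const 2

theorem symmRearr_indicator (A : Set ℝ) :
    symmRearr (A.indicator 1) = (symmSet {y | y ∈ Set.Ioo (-π) π ∧ y ∈ A}).indicator 1 := by
  ext x
  have hlevel (t : ℝ) (ht : t ∈ Set.Ioi 0) :
      (symmSet {y | y ∈ Set.Ioo (-π) π ∧ t < A.indicator 1 y}).indicator (fun _ ↦ (1 : ℝ)) x =
        (Set.Iio (1 : ℝ)).indicator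
          (fun _ ↦ (symmSet {y | y ∈ Set.Ioo (-π) π ∧ y ∈ A}).indicator 1 x) t := by
    have hsuper (y : ℝ) : t < A.indicator 1 y ↔ t < 1 ∧ y ∈ A := by
      by_cases hy : y ∈ A <;> simp [hy, (Set.mem_Ioi.1 ht).le]
    by_cases ht1 : t < 1
    · simp only [hsuper, ht1, true_and, Set.mem_Iio, Set.indicator_of_mem]
      rfl
    · simp [hsuper, ht1, symmSet]
  rw [symmRearr, setIntegral_congr_fun measurableSet_Ioi hlevel,
    setIntegral_indicator measurableSet_Iio, Set.Ioi_inter_Iio]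
  simp

theorem perRearr1_indicator (m : ℕ) (E : Set (ℝ × EuclideanSpace ℝ (Fin m)))
    (x : ℝ × EuclideanSpace ℝ (Fin m)) :
    perRearr1 m (E.indicator fun _ ↦ 1) x = arc (halfSliceLength E x.2) x.1 := by
  have hslice : (fun t ↦ |E.indicator (fun _ ↦ (1 : ℝ)) (t, x.2)|) =
      Set.indicator {t | (t, x.2) ∈ E} 1 := by
    ext t
    by_cases ht : (t, x.2) ∈ E <;> simp [ht]
  rw [perRearr1, hslice, perRearr, symmRearr_indicator]
  rfl

theorem measurable_perRearr1_indicator (hE : MeasurableSet E) :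
    Measurable (perRearr1 m (E.indicator fun _ ↦ (1 : ℝ))) := by
  have hlength := measurable_halfSliceLength hE
  have harc : perRearr1 m (E.indicator fun _ ↦ (1 : ℝ)) =
      Set.indicator {x | |x.1 - 2 * π * ⌊(x.1 + π) / (2 * π)⌋| < halfSliceLength E x.2} 1 := by
    ext x
    simp only [perRearr1_indicator, arc, periodize, Set.indicator_apply, Set.mem_Ioo, abs_lt,
      Set.mem_ofPred_eq, Pi.one_apply]
  rw [harc]
  exact measurable_one.indicator (measurableSet_lt (by fun_prop) (by fun_prop))

theorem isPeriodicDensity_indicator_slice (hE : MeasurableSet E)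
    (hEper : ∀ x : ℝ × EuclideanSpace ℝ (Fin m), (x.1 + 2 * π, x.2) ∈ E ↔ x ∈ E)
    (x' : EuclideanSpace ℝ (Fin m)) :
    IsPeriodicDensity (2 * π) fun t ↦ E.indicator (fun _ ↦ (1 : ℝ)) (t, x') where
  measurable := (measurable_const.indicator hE).comp measurable_prodMk_right
  periodic t := Set.indicator_const_eq_indicator_const (hEper (t, x'))
  mem_Icc _ := ⟨Set.indicator_nonneg (fun _ _ ↦ zero_le_one) _,
    Set.indicator_le_self' (fun _ _ ↦ zero_le_one) _⟩

theorem integral_indicator_slice (hE : MeasurableSet E)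
    (hEper : ∀ x : ℝ × EuclideanSpace ℝ (Fin m), (x.1 + 2 * π, x.2) ∈ E ↔ x ∈ E)
    (x' : EuclideanSpace ℝ (Fin m)) :
    ∫ t in 0..2 * π, E.indicator (fun _ ↦ (1 : ℝ)) (t, x') = 2 * halfSliceLength E x' := by
  have hslice : MeasurableSet {t : ℝ | (t, x') ∈ E} := measurable_prodMk_right hE
  rw [← (isPeriodicDensity_indicator_slice hE hEper x').integral_period (-π),
    show -π + 2 * π = π by ring, intervalIntegral.integral_of_le (by linarith [pi_pos]),
    integral_Ioc_eq_integral_Ioo]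
  exact (setIntegral_indicator (f := fun _ ↦ (1 : ℝ)) hslice).trans <| by
    simp only [integral_const, smul_eq_mul, mul_one, measureReal_restrict_apply_univ,
      halfSliceLength, mul_div_cancel₀ _ (two_ne_zero' ℝ)]
    rfl

end Slices

section EqualityOfSeminorms

variable {m : ℕ} {s p : ℝ} {E : Set (ℝ × EuclideanSpace ℝ (Fin m))}

theorem gagP_indicator (hp : 0 < p) (hE : MeasurableSet E)
    (hEper : ∀ x : ℝ × EuclideanSpace ℝ (Fin m), (x.1 + 2 * π, x.2) ∈ E ↔ x ∈ E) (s : ℝ) :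
    gagP m s p (E.indicator fun _ ↦ 1) =
      ∫⁻ q, circleEnergy (periodicKernel (m + 1 + s * p) ‖q.1 - q.2‖)
        (fun t ↦ E.indicator (fun _ ↦ 1) (t, q.1)) (fun t ↦ E.indicator (fun _ ↦ 1) (t, q.2))
        ∂volume.prod volume :=
  gagP_eq_lintegral_circleEnergy hp (measurable_const.indicator hE)
    (isPeriodicDensity_indicator_slice hE hEper) fun _ ↦ Set.indicator_eq_zero_or_self _ _ _

theorem gagP_perRearr1_indicator (hp : 0 < p) (hE : MeasurableSet E) (s : ℝ) :
    gagP m s p (perRearr1 m (E.indicator fun _ ↦ 1)) =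
      ∫⁻ q, circleEnergy (periodicKernel (m + 1 + s * p) ‖q.1 - q.2‖)
        (arc (halfSliceLength E q.1)) (arc (halfSliceLength E q.2)) ∂volume.prod volume := by
  rw [gagP_eq_lintegral_circleEnergy hp (measurable_perRearr1_indicator hE)]
  · simp only [perRearr1_indicator]
  · simpa only [perRearr1_indicator] using fun x' ↦ isPeriodicDensity_arc (halfSliceLength E x')
  · intro x
    rw [perRearr1_indicator]
    exact Set.indicator_eq_zero_or_self _ _ _

theorem ae_eq_perRearr1_indicator_iff (hE : MeasurableSet E) (a : ℝ) :
    (∀ᵐ x, E.indicator (fun _ ↦ (1 : ℝ)) x =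
        perRearr1 m (E.indicator fun _ ↦ 1) (x.1 + a, x.2)) ↔
      ∀ᵐ x', (fun t ↦ E.indicator (fun _ ↦ (1 : ℝ)) (t, x')) =ᵐ[volume]
        fun t ↦ arc (halfSliceLength E x') (t + a) := by
  have hmeas := measurable_perRearr1_indicator hE
  have hset : MeasurableSet {x : ℝ × EuclideanSpace ℝ (Fin m) | E.indicator (fun _ ↦ (1 : ℝ)) x =
      perRearr1 m (E.indicator fun _ ↦ 1) (x.1 + a, x.2)} :=
    measurableSet_eq_fun (measurable_const.indicator hE) (by fun_prop)
  rw [Measure.volume_eq_prod, Measure.ae_prod_iff_ae_ae hset, Measure.ae_ae_comm hset]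
  simp only [perRearr1_indicator, Filter.EventuallyEq]

end EqualityOfSeminorms

theorem stmt_8_general (m : ℕ) (s p : ℝ) (hs : 0 < s) (hp : 0 < p)
    (E : Set (ℝ × EuclideanSpace ℝ (Fin m))) (hE : MeasurableSet E)
    (hEper : ∀ x : ℝ × EuclideanSpace ℝ (Fin m), (x.1 + 2 * π, x.2) ∈ E ↔ x ∈ E)
    (hfin : gagP m s p (E.indicator fun _ ↦ (1 : ℝ)) ≠ ⊤) :
    gagSeminorm m s p (perRearr1 m (E.indicator fun _ ↦ (1 : ℝ))) =
        gagSeminorm m s p (E.indicator fun _ ↦ (1 : ℝ)) ↔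
      ∃ a : ℝ, ∀ᵐ x ∂(volume : Measure (ℝ × EuclideanSpace ℝ (Fin m))),
        E.indicator (fun _ ↦ (1 : ℝ)) x =
          perRearr1 m (E.indicator fun _ ↦ (1 : ℝ)) (x.1 + a, x.2) := by
  have hexp : 1 < (m : ℝ) + 1 + s * p := by linarith [mul_pos hs hp, Nat.cast_nonneg (α := ℝ) m]
  have hK := measurable_uncurry_periodicKernel (m + 1 + s * p)
    (by fun_prop : Measurable fun q : EuclideanSpace ℝ (Fin m) × EuclideanSpace ℝ (Fin m) ↦
      ‖q.1 - q.2‖)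
  rw [gagP_indicator hp hE hEper] at hfin
  rw [gagSeminorm, gagSeminorm, (ENNReal.rpow_left_injective (one_div_pos.2 hp).ne').eq_iff,
    gagP_indicator hp hE hEper, gagP_perRearr1_indicator hp hE]
  simp only [ae_eq_perRearr1_indicator_iff hE]
  exact lintegral_circleEnergy_arc_eq_iff (fun _ ↦ hK.of_uncurry_left)
    (fun _ ↦ even_periodicKernel _ _) (fun _ ↦ strictAntiOn_periodicKernel hexp _)
    (isPeriodicDensity_indicator_slice hE hEper) (integral_indicator_slice hE hEper)
    (measurable_circleEnergy hK (measurable_const.indicator hE)).aemeasurable hfin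

theorem stmt_8 (m : ℕ) (s : ℝ) (hs0 : 0 < s) (hs1 : s < 1)
    (E : Set (ℝ × EuclideanSpace ℝ (Fin m))) (hE : MeasurableSet E)
    (hEper : ∀ x : ℝ × EuclideanSpace ℝ (Fin m), (x.1 + 2 * π, x.2) ∈ E ↔ x ∈ E)
    (hfin : gagP m s 1 (E.indicator fun _ => (1 : ℝ)) ≠ ⊤) :
    gagSeminorm m s 1 (perRearr1 m (E.indicator fun _ => (1 : ℝ))) =
        gagSeminorm m s 1 (E.indicator fun _ => (1 : ℝ)) ↔
      ∃ a : ℝ, ∀ᵐ x ∂(volume : Measure (ℝ × EuclideanSpace ℝ (Fin m))),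
        E.indicator (fun _ => (1 : ℝ)) x =
          perRearr1 m (E.indicator fun _ => (1 : ℝ)) (x.1 + a, x.2) :=
  stmt_8_general m s 1 hs0 one_pos E hE hEper hfin
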